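/- arXiv:1801.02357 — 2 statements merged into one kernel-verified Lean document; each statement's English description precedes it below -/
import Mathlib

section
/- The second-variation form of the fundamental Scherk surface evaluated at the test functions φ²(u,v) = u − u⁵/4 and φ³(u,v) = v − v⁵/4 is negative: Q(φ²) < 0 and Q(φ³) < 0. -/
noncomputable section
open MeasureTheory Real

/-- Dot product on `ℝ³ = ℝ × ℝ × ℝ`. -/
def dot3 (a b : ℝ × ℝ × ℝ) : ℝ := a.1 * b.1 + a.2.1 * b.2.1 + a.2.2 * b.2.2

/-- Cross product on `ℝ³ = ℝ × ℝ × ℝ`. -/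
def cross3 (a b : ℝ × ℝ × ℝ) : ℝ × ℝ × ℝ :=
  (a.2.1 * b.2.2 - a.2.2 * b.2.1, a.2.2 * b.1 - a.1 * b.2.2, a.1 * b.2.1 - a.2.1 * b.1)

/-- Euclidean norm on `ℝ³ = ℝ × ℝ × ℝ`. -/
def norm3 (a : ℝ × ℝ × ℝ) : ℝ := Real.sqrt (dot3 a a)

/-- Partial derivative in the first (`u`) variable. -/
def pdU {E : Type*} [NormedAddCommGroup E] [NormedSpace ℝ E] (f : ℝ × ℝ → E) (p : ℝ × ℝ) : E :=
  deriv (fun x => f (x, p.2)) p.1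

/-- Partial derivative in the second (`v`) variable. -/
def pdV {E : Type*} [NormedAddCommGroup E] [NormedSpace ℝ E] (f : ℝ × ℝ → E) (p : ℝ × ℝ) : E :=
  deriv (fun y => f (p.1, y)) p.2

/-- The fundamental domain `Ω₀ = (-1,1) × (-1,1)`. -/
def Ω₀ : Set (ℝ × ℝ) := Set.Ioo (-1 : ℝ) 1 ×ˢ Set.Ioo (-1 : ℝ) 1

/-- The fundamental Scherk parametrization. -/
def scherk (p : ℝ × ℝ) : ℝ × ℝ × ℝ :=
  (arctan (2 * p.1 / (p.1 ^ 2 + p.2 ^ 2 - 1)),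
   arctan (-2 * p.2 / (p.1 ^ 2 + p.2 ^ 2 - 1)),
   (1 / 2) * Real.log (((p.1 ^ 2 - p.2 ^ 2 + 1) ^ 2 + 4 * p.1 ^ 2 * p.2 ^ 2) /
     ((p.1 ^ 2 - p.2 ^ 2 - 1) ^ 2 + 4 * p.1 ^ 2 * p.2 ^ 2)))

def σu : ℝ × ℝ → ℝ × ℝ × ℝ := pdU scherk
def σv : ℝ × ℝ → ℝ × ℝ × ℝ := pdV scherk
def σuu : ℝ × ℝ → ℝ × ℝ × ℝ := pdU σu
def σuv : ℝ × ℝ → ℝ × ℝ × ℝ := pdV σu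
def σvv : ℝ × ℝ → ℝ × ℝ × ℝ := pdV σv

/-- First fundamental form. -/
def g11 (p : ℝ × ℝ) : ℝ := dot3 (σu p) (σu p)
def g12 (p : ℝ × ℝ) : ℝ := dot3 (σu p) (σv p)
def g22 (p : ℝ × ℝ) : ℝ := dot3 (σv p) (σv p)

def detg (p : ℝ × ℝ) : ℝ := g11 p * g22 p - g12 p ^ 2

/-- Components of the inverse metric `(gⁱʲ)`. -/
def ginv11 (p : ℝ × ℝ) : ℝ := g22 p / detg p
def ginv12 (p : ℝ × ℝ) : ℝ := -g12 p / detg p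
def ginv22 (p : ℝ × ℝ) : ℝ := g11 p / detg p

/-- Unit normal `N = (σ_u × σ_v)/‖σ_u × σ_v‖`. -/
def NS (p : ℝ × ℝ) : ℝ × ℝ × ℝ :=
  (norm3 (cross3 (σu p) (σv p)))⁻¹ • cross3 (σu p) (σv p)

/-- Second fundamental form. -/
def h11 (p : ℝ × ℝ) : ℝ := dot3 (σuu p) (NS p)
def h12 (p : ℝ × ℝ) : ℝ := dot3 (σuv p) (NS p)
def h22 (p : ℝ × ℝ) : ℝ := dot3 (σvv p) (NS p)

/-- Gaussian curvature. -/
def κ (p : ℝ × ℝ) : ℝ := (h11 p * h22 p - h12 p ^ 2) / detg p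

/-- The second-variation quadratic form of the fundamental Scherk surface. -/
def Q (φ : ℝ × ℝ → ℝ) : ℝ :=
  ∫ p in Ω₀,
    (ginv11 p * pdU φ p ^ 2 + 2 * ginv12 p * pdU φ p * pdV φ p + ginv22 p * pdV φ p ^ 2
      + 2 * κ p * φ p ^ 2) * Real.sqrt (detg p)

/-- The polarized second-variation bilinear form. -/
def B (φ ψ : ℝ × ℝ → ℝ) : ℝ :=
  ∫ p in Ω₀,
    (ginv11 p * pdU φ p * pdU ψ p + ginv12 p * pdU φ p * pdV ψ p
      + ginv12 p * pdV φ p * pdU ψ p + ginv22 p * pdV φ p * pdV ψ p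
      + 2 * κ p * φ p * ψ p) * Real.sqrt (detg p)

/-- The test functions `φ¹, φ², φ³`. -/
def Φ : Fin 3 → (ℝ × ℝ → ℝ) :=
  ![fun p => (p.1 * p.2) ^ 2 + 2,
    fun p => p.1 - p.1 ^ 5 / 4,
    fun p => p.2 - p.2 ^ 5 / 4]

/-- `|z² + 1|²` for `z = u + iv`. -/
def denP (u v : ℝ) : ℝ := (u ^ 2 + v ^ 2 - 1) ^ 2 + 4 * u ^ 2

/-- `|z² - 1|²` for `z = u + iv`. -/
def denM (u v : ℝ) : ℝ := (u ^ 2 + v ^ 2 - 1) ^ 2 + 4 * v ^ 2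

lemma denP_pos {u v : ℝ} (h : u ^ 2 + v ^ 2 - 1 ≠ 0) : 0 < denP u v := by
  unfold denP; positivity

lemma denM_pos {u v : ℝ} (h : u ^ 2 + v ^ 2 - 1 ≠ 0) : 0 < denM u v := by
  unfold denM; positivity

lemma scherk_third_arg_num (u v : ℝ) :
    (u ^ 2 - v ^ 2 + 1) ^ 2 + 4 * u ^ 2 * v ^ 2 = denP u v := by
  unfold denP; ring

lemma scherk_third_arg_den (u v : ℝ) :
    (u ^ 2 - v ^ 2 - 1) ^ 2 + 4 * u ^ 2 * v ^ 2 = denM u v := by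
  unfold denM; ring

/-- Closed form of `σ_u` off the unit circle. -/
def scherkU (p : ℝ × ℝ) : ℝ × ℝ × ℝ :=
  (-2 * (p.1 ^ 2 - p.2 ^ 2 + 1) / denP p.1 p.2,
   4 * p.1 * p.2 / denM p.1 p.2,
   2 * p.1 * (p.1 ^ 2 + p.2 ^ 2 + 1) / denP p.1 p.2
     - 2 * p.1 * (p.1 ^ 2 + p.2 ^ 2 - 1) / denM p.1 p.2)

/-- Closed form of `σ_v` off the unit circle. -/
def scherkV (p : ℝ × ℝ) : ℝ × ℝ × ℝ :=
  (-4 * p.1 * p.2 / denP p.1 p.2,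
   -2 * (p.1 ^ 2 - p.2 ^ 2 - 1) / denM p.1 p.2,
   2 * p.2 * (p.1 ^ 2 + p.2 ^ 2 - 1) / denP p.1 p.2
     - 2 * p.2 * (p.1 ^ 2 + p.2 ^ 2 + 1) / denM p.1 p.2)

/-- A normal field of the Scherk surface, of length `1 + u² + v²`. -/
def scherkNormal (p : ℝ × ℝ) : ℝ × ℝ × ℝ := (-2 * p.1, -2 * p.2, p.1 ^ 2 + p.2 ^ 2 - 1)

lemma hasDerivAt_denP_left (u v : ℝ) :
    HasDerivAt (fun x => denP x v) (4 * u * (u ^ 2 + v ^ 2 + 1)) u := by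
  have h := (((((hasDerivAt_id u).pow 2).add_const (v ^ 2)).sub_const 1).pow 2).add
    (((hasDerivAt_id u).pow 2).const_mul 4)
  refine h.congr_deriv ?_
  simp
  ring

lemma hasDerivAt_denP_right (u v : ℝ) :
    HasDerivAt (fun y => denP u y) (4 * v * (u ^ 2 + v ^ 2 - 1)) v := by
  have h := (((((hasDerivAt_id v).pow 2).const_add (u ^ 2)).sub_const 1).pow 2).add_const
    (4 * u ^ 2)
  refine h.congr_deriv ?_
  simp
  ring

lemma denM_swap (u v : ℝ) : denM u v = denP v u := by
  unfold denM denP; ring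

lemma hasDerivAt_denM_left (u v : ℝ) :
    HasDerivAt (fun x => denM x v) (4 * u * (u ^ 2 + v ^ 2 - 1)) u := by
  simp only [denM_swap]
  exact (hasDerivAt_denP_right v u).congr_deriv (by ring)

lemma hasDerivAt_denM_right (u v : ℝ) :
    HasDerivAt (fun y => denM u y) (4 * v * (u ^ 2 + v ^ 2 + 1)) v := by
  simp only [denM_swap]
  exact (hasDerivAt_denP_left v u).congr_deriv (by ring)

lemma HasDerivAt.half_log_div {f g : ℝ → ℝ} {f' g' x : ℝ} (hf : HasDerivAt f f' x)
    (hg : HasDerivAt g g' x) (hfx : f x ≠ 0) (hgx : g x ≠ 0) :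
    HasDerivAt (fun t => (1 / 2) * Real.log (f t / g t))
      (f' / (2 * f x) - g' / (2 * g x)) x := by
  refine (((hf.div hg hgx).log (div_ne_zero hfx hgx)).const_mul (1 / 2)).congr_deriv ?_
  simp only [Pi.div_apply]
  field_simp

lemma hasDerivAt_arctan_two_mul_div (u v : ℝ) (h : u ^ 2 + v ^ 2 - 1 ≠ 0) :
    HasDerivAt (fun x => arctan (2 * x / (x ^ 2 + v ^ 2 - 1)))
      (-2 * (u ^ 2 - v ^ 2 + 1) / denP u v) u := by
  have hn : HasDerivAt (fun x : ℝ => 2 * x) 2 u := by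
    simpa using (hasDerivAt_id u).const_mul 2
  have hd : HasDerivAt (fun x : ℝ => x ^ 2 + v ^ 2 - 1) (2 * u) u := by
    simpa using (((hasDerivAt_id u).pow 2).add_const (v ^ 2)).sub_const 1
  refine (hn.div hd h).arctan.congr_deriv ?_
  have hP := (denP_pos h).ne'
  have e : 1 + (2 * u / (u ^ 2 + v ^ 2 - 1)) ^ 2 = denP u v / (u ^ 2 + v ^ 2 - 1) ^ 2 := by
    unfold denP; field_simp; ring
  simp only [Pi.div_apply, e]
  field_simp
  ring

lemma hasDerivAt_arctan_const_div (u v : ℝ) (h : u ^ 2 + v ^ 2 - 1 ≠ 0) :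
    HasDerivAt (fun y => arctan (2 * u / (u ^ 2 + y ^ 2 - 1)))
      (-4 * u * v / denP u v) v := by
  have hd : HasDerivAt (fun y : ℝ => u ^ 2 + y ^ 2 - 1) (2 * v) v := by
    simpa using (((hasDerivAt_id v).pow 2).const_add (u ^ 2)).sub_const 1
  refine ((hasDerivAt_const v (2 * u)).div hd h).arctan.congr_deriv ?_
  have hP := (denP_pos h).ne'
  have e : 1 + (2 * u / (u ^ 2 + v ^ 2 - 1)) ^ 2 = denP u v / (u ^ 2 + v ^ 2 - 1) ^ 2 := by
    unfold denP; field_simp; ring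
  simp only [Pi.div_apply, e]
  field_simp
  ring

lemma σu_eq {p : ℝ × ℝ} (h : p.1 ^ 2 + p.2 ^ 2 - 1 ≠ 0) : σu p = scherkU p := by
  obtain ⟨u, v⟩ := p
  dsimp only at h
  have h' : v ^ 2 + u ^ 2 - 1 ≠ 0 := by rwa [add_comm (v ^ 2)]
  have hP := (denP_pos h).ne'
  have hM := (denM_pos h).ne'
  have h1 := hasDerivAt_arctan_two_mul_div u v h
  have h2 : HasDerivAt (fun x => arctan (-2 * v / (x ^ 2 + v ^ 2 - 1)))
      (4 * u * v / denM u v) u := by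
    refine ((hasDerivAt_arctan_const_div v u h').neg.congr_deriv ?_).congr_of_eventuallyEq
      (.of_forall fun x => ?_)
    · rw [← denM_swap]; ring
    · simp only [Pi.neg_apply]
      rw [← arctan_neg, ← neg_div, neg_mul, add_comm (v ^ 2)]
  have h3 := (hasDerivAt_denP_left u v).half_log_div (hasDerivAt_denM_left u v) hP hM
  refine ((h1.prodMk (h2.prodMk h3)).congr_deriv ?_ |>.congr_of_eventuallyEq ?_).deriv
  · simp only [scherkU, Prod.mk.injEq, true_and]
    field_simp
    ring
  · exact .of_forall fun x => by
      simp only [scherk, scherk_third_arg_num, scherk_third_arg_den]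

lemma σv_eq {p : ℝ × ℝ} (h : p.1 ^ 2 + p.2 ^ 2 - 1 ≠ 0) : σv p = scherkV p := by
  obtain ⟨u, v⟩ := p
  dsimp only at h
  have h' : v ^ 2 + u ^ 2 - 1 ≠ 0 := by rwa [add_comm (v ^ 2)]
  have hP := (denP_pos h).ne'
  have hM := (denM_pos h).ne'
  have h1 := hasDerivAt_arctan_const_div u v h
  have h2 : HasDerivAt (fun y => arctan (-2 * y / (u ^ 2 + y ^ 2 - 1)))
      (-2 * (u ^ 2 - v ^ 2 - 1) / denM u v) v := by
    refine ((hasDerivAt_arctan_two_mul_div v u h').neg.congr_deriv ?_).congr_of_eventuallyEq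
      (.of_forall fun x => ?_)
    · rw [← denM_swap]; ring
    · simp only [Pi.neg_apply]
      rw [← arctan_neg, ← neg_div, neg_mul, add_comm (u ^ 2)]
  have h3 := (hasDerivAt_denP_right u v).half_log_div (hasDerivAt_denM_right u v) hP hM
  refine ((h1.prodMk (h2.prodMk h3)).congr_deriv ?_ |>.congr_of_eventuallyEq ?_).deriv
  · simp only [scherkV, Prod.mk.injEq, true_and]
    field_simp
    ring
  · exact .of_forall fun x => by
      simp only [scherk, scherk_third_arg_num, scherk_third_arg_den]

lemma dot3_scherkU_scherkNormal {p : ℝ × ℝ} (h : p.1 ^ 2 + p.2 ^ 2 - 1 ≠ 0) :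
    dot3 (scherkU p) (scherkNormal p) = 0 := by
  have hP := (denP_pos h).ne'
  have hM := (denM_pos h).ne'
  simp only [dot3, scherkU, scherkNormal]
  field_simp
  unfold denP denM
  ring

lemma dot3_scherkV_scherkNormal {p : ℝ × ℝ} (h : p.1 ^ 2 + p.2 ^ 2 - 1 ≠ 0) :
    dot3 (scherkV p) (scherkNormal p) = 0 := by
  have hP := (denP_pos h).ne'
  have hM := (denM_pos h).ne'
  simp only [dot3, scherkV, scherkNormal]
  field_simp
  unfold denP denM
  ring

/-- The conformal factor of the Scherk parametrization. -/
def scherkFactor (p : ℝ × ℝ) : ℝ :=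
  4 * (1 + p.1 ^ 2 + p.2 ^ 2) ^ 2 / (denP p.1 p.2 * denM p.1 p.2)

lemma scherkFactor_pos {p : ℝ × ℝ} (h : p.1 ^ 2 + p.2 ^ 2 - 1 ≠ 0) : 0 < scherkFactor p := by
  have hP := denP_pos h
  have hM := denM_pos h
  unfold scherkFactor
  positivity

lemma g11_eq {p : ℝ × ℝ} (h : p.1 ^ 2 + p.2 ^ 2 - 1 ≠ 0) : g11 p = scherkFactor p := by
  have hP := (denP_pos h).ne'
  have hM := (denM_pos h).ne'
  simp only [g11, σu_eq h, dot3, scherkU, scherkFactor]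
  field_simp
  unfold denP denM
  ring

lemma g12_eq {p : ℝ × ℝ} (h : p.1 ^ 2 + p.2 ^ 2 - 1 ≠ 0) : g12 p = 0 := by
  have hP := (denP_pos h).ne'
  have hM := (denM_pos h).ne'
  simp only [g12, σu_eq h, σv_eq h, dot3, scherkU, scherkV]
  field_simp
  unfold denP denM
  ring

lemma g22_eq {p : ℝ × ℝ} (h : p.1 ^ 2 + p.2 ^ 2 - 1 ≠ 0) : g22 p = scherkFactor p := by
  have hP := (denP_pos h).ne'
  have hM := (denM_pos h).ne'
  simp only [g22, σv_eq h, dot3, scherkV, scherkFactor]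
  field_simp
  unfold denP denM
  ring

lemma detg_eq {p : ℝ × ℝ} (h : p.1 ^ 2 + p.2 ^ 2 - 1 ≠ 0) : detg p = scherkFactor p ^ 2 := by
  rw [detg, g11_eq h, g12_eq h, g22_eq h]; ring

lemma cross3_σu_σv {p : ℝ × ℝ} (h : p.1 ^ 2 + p.2 ^ 2 - 1 ≠ 0) :
    cross3 (σu p) (σv p) =
      (4 * (1 + p.1 ^ 2 + p.2 ^ 2) / (denP p.1 p.2 * denM p.1 p.2)) • scherkNormal p := by
  have hP := (denP_pos h).ne'
  have hM := (denM_pos h).ne'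
  simp only [σu_eq h, σv_eq h, cross3, scherkU, scherkV, scherkNormal, Prod.smul_mk, smul_eq_mul,
    Prod.mk.injEq]
  refine ⟨?_, ?_, ?_⟩
  · field_simp
    unfold denP denM
    ring
  · field_simp
    unfold denP denM
    ring
  · field_simp
    ring

lemma norm3_smul (c : ℝ) (a : ℝ × ℝ × ℝ) : norm3 (c • a) = |c| * norm3 a := by
  unfold norm3
  rw [← Real.sqrt_sq_eq_abs, ← Real.sqrt_mul (sq_nonneg c)]
  congr 1
  simp only [dot3, Prod.smul_fst, Prod.smul_snd, smul_eq_mul]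
  ring

lemma norm3_scherkNormal (p : ℝ × ℝ) : norm3 (scherkNormal p) = 1 + p.1 ^ 2 + p.2 ^ 2 := by
  rw [norm3, Real.sqrt_eq_iff_mul_self_eq_of_pos (by positivity)]
  simp only [dot3, scherkNormal]
  ring

lemma NS_eq {p : ℝ × ℝ} (h : p.1 ^ 2 + p.2 ^ 2 - 1 ≠ 0) :
    NS p = (1 / (1 + p.1 ^ 2 + p.2 ^ 2)) • scherkNormal p := by
  have hP := denP_pos h
  have hM := denM_pos h
  rw [NS, cross3_σu_σv h, norm3_smul, norm3_scherkNormal, abs_of_pos (by positivity),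
    smul_smul]
  congr 1
  have : 1 + p.1 ^ 2 + p.2 ^ 2 ≠ 0 := by positivity
  field_simp

lemma dot3_smul_right (c : ℝ) (a b : ℝ × ℝ × ℝ) : dot3 a (c • b) = c * dot3 a b := by
  simp only [dot3, Prod.smul_fst, Prod.smul_snd, smul_eq_mul]
  ring

lemma dot3_deriv_eq_neg_of_orthogonal {f n : ℝ → ℝ × ℝ × ℝ} {n' : ℝ × ℝ × ℝ} {t : ℝ}
    (hf : DifferentiableAt ℝ f t) (hn : HasDerivAt n n' t)
    (h : ∀ᶠ s in nhds t, dot3 (f s) (n s) = 0) :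
    dot3 (deriv f t) (n t) = -dot3 (f t) n' := by
  have hf' := hf.hasDerivAt
  have e : HasDerivAt (fun s => dot3 (f s) (n s))
      (dot3 (deriv f t) (n t) + dot3 (f t) n') t := by
    have f1 : HasDerivAt (fun s => (f s).1) (deriv f t).1 t := hf'.fst
    have f2 : HasDerivAt (fun s => (f s).2.1) (deriv f t).2.1 t := hf'.snd.fst
    have f3 : HasDerivAt (fun s => (f s).2.2) (deriv f t).2.2 t := hf'.snd.snd
    have n1 : HasDerivAt (fun s => (n s).1) n'.1 t := hn.fst
    have n2 : HasDerivAt (fun s => (n s).2.1) n'.2.1 t := hn.snd.fst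
    have n3 : HasDerivAt (fun s => (n s).2.2) n'.2.2 t := hn.snd.snd
    refine (((f1.mul n1).add (f2.mul n2)).add (f3.mul n3)).congr_deriv ?_
    simp only [dot3]; ring
  have e0 : HasDerivAt (fun s => dot3 (f s) (n s)) 0 t :=
    (hasDerivAt_const t (0 : ℝ)).congr_of_eventuallyEq h
  linarith [e.unique e0]

lemma eventually_off_circle_left {u v : ℝ} (h : u ^ 2 + v ^ 2 - 1 ≠ 0) :
    ∀ᶠ x in nhds u, x ^ 2 + v ^ 2 - 1 ≠ 0 :=
  (by fun_prop : Continuous fun x : ℝ => x ^ 2 + v ^ 2 - 1).continuousAt.eventually_ne h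

lemma eventually_off_circle_right {u v : ℝ} (h : u ^ 2 + v ^ 2 - 1 ≠ 0) :
    ∀ᶠ y in nhds v, u ^ 2 + y ^ 2 - 1 ≠ 0 :=
  (by fun_prop : Continuous fun y : ℝ => u ^ 2 + y ^ 2 - 1).continuousAt.eventually_ne h

lemma differentiableAt_scherkU {p : ℝ × ℝ} (h : p.1 ^ 2 + p.2 ^ 2 - 1 ≠ 0) :
    DifferentiableAt ℝ scherkU p := by
  have hP := (denP_pos h).ne'
  have hM := (denM_pos h).ne'
  unfold denP at hP
  unfold denM at hM
  unfold scherkU denP denM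
  fun_prop (disch := assumption)

lemma differentiableAt_scherkV {p : ℝ × ℝ} (h : p.1 ^ 2 + p.2 ^ 2 - 1 ≠ 0) :
    DifferentiableAt ℝ scherkV p := by
  have hP := (denP_pos h).ne'
  have hM := (denM_pos h).ne'
  unfold denP at hP
  unfold denM at hM
  unfold scherkV denP denM
  fun_prop (disch := assumption)

lemma hasDerivAt_scherkNormal_left (u v : ℝ) :
    HasDerivAt (fun x => scherkNormal (x, v)) (-2, 0, 2 * u) u := by
  have h1 : HasDerivAt (fun x : ℝ => -2 * x) (-2) u := by
    simpa using (hasDerivAt_id u).const_mul (-2)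
  have h3 : HasDerivAt (fun x : ℝ => x ^ 2 + v ^ 2 - 1) (2 * u) u := by
    simpa using (((hasDerivAt_id u).pow 2).add_const (v ^ 2)).sub_const 1
  exact h1.prodMk ((hasDerivAt_const u (-2 * v)).prodMk h3)

lemma hasDerivAt_scherkNormal_right (u v : ℝ) :
    HasDerivAt (fun y => scherkNormal (u, y)) (0, -2, 2 * v) v := by
  have h2 : HasDerivAt (fun y : ℝ => -2 * y) (-2) v := by
    simpa using (hasDerivAt_id v).const_mul (-2)
  have h3 : HasDerivAt (fun y : ℝ => u ^ 2 + y ^ 2 - 1) (2 * v) v := by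
    simpa using (((hasDerivAt_id v).pow 2).const_add (u ^ 2)).sub_const 1
  exact (hasDerivAt_const v (-2 * u)).prodMk (h2.prodMk h3)

lemma dot3_pdU_scherkNormal {f F : ℝ × ℝ → ℝ × ℝ × ℝ}
    (hfF : ∀ {q : ℝ × ℝ}, q.1 ^ 2 + q.2 ^ 2 - 1 ≠ 0 → f q = F q)
    (hF : ∀ {q : ℝ × ℝ}, q.1 ^ 2 + q.2 ^ 2 - 1 ≠ 0 → DifferentiableAt ℝ F q)
    (hn : ∀ {q : ℝ × ℝ}, q.1 ^ 2 + q.2 ^ 2 - 1 ≠ 0 → dot3 (F q) (scherkNormal q) = 0)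
    {p : ℝ × ℝ} (h : p.1 ^ 2 + p.2 ^ 2 - 1 ≠ 0) :
    dot3 (pdU f p) (scherkNormal p) = -dot3 (F p) (-2, 0, 2 * p.1) := by
  obtain ⟨u, v⟩ := p
  dsimp only at h
  have hev := eventually_off_circle_left h
  have hd : DifferentiableAt ℝ (fun x => F (x, v)) u :=
    DifferentiableAt.comp (f := fun x : ℝ => (x, v)) u (hF (q := (u, v)) h) (by fun_prop)
  have e : pdU f (u, v) = deriv (fun x => F (x, v)) u :=
    Filter.EventuallyEq.deriv_eq (hev.mono fun x hx => hfF (q := (x, v)) hx)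
  rw [e]
  exact dot3_deriv_eq_neg_of_orthogonal hd (hasDerivAt_scherkNormal_left u v)
    (hev.mono fun x hx => hn (q := (x, v)) hx)

lemma dot3_pdV_scherkNormal {f F : ℝ × ℝ → ℝ × ℝ × ℝ}
    (hfF : ∀ {q : ℝ × ℝ}, q.1 ^ 2 + q.2 ^ 2 - 1 ≠ 0 → f q = F q)
    (hF : ∀ {q : ℝ × ℝ}, q.1 ^ 2 + q.2 ^ 2 - 1 ≠ 0 → DifferentiableAt ℝ F q)
    (hn : ∀ {q : ℝ × ℝ}, q.1 ^ 2 + q.2 ^ 2 - 1 ≠ 0 → dot3 (F q) (scherkNormal q) = 0)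
    {p : ℝ × ℝ} (h : p.1 ^ 2 + p.2 ^ 2 - 1 ≠ 0) :
    dot3 (pdV f p) (scherkNormal p) = -dot3 (F p) (0, -2, 2 * p.2) := by
  obtain ⟨u, v⟩ := p
  dsimp only at h
  have hev := eventually_off_circle_right h
  have hd : DifferentiableAt ℝ (fun y => F (u, y)) v :=
    DifferentiableAt.comp (f := fun y : ℝ => (u, y)) v (hF (q := (u, v)) h) (by fun_prop)
  have e : pdV f (u, v) = deriv (fun y => F (u, y)) v :=
    Filter.EventuallyEq.deriv_eq (hev.mono fun y hy => hfF (q := (u, y)) hy)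
  rw [e]
  exact dot3_deriv_eq_neg_of_orthogonal hd (hasDerivAt_scherkNormal_right u v)
    (hev.mono fun y hy => hn (q := (u, y)) hy)

lemma κ_mul_scherkFactor {p : ℝ × ℝ} (h : p.1 ^ 2 + p.2 ^ 2 - 1 ≠ 0) :
    κ p * scherkFactor p = -4 / (1 + p.1 ^ 2 + p.2 ^ 2) ^ 2 := by
  have hP := (denP_pos h).ne'
  have hM := (denM_pos h).ne'
  have hr : 1 + p.1 ^ 2 + p.2 ^ 2 ≠ 0 := by positivity
  have huu := dot3_pdU_scherkNormal σu_eq differentiableAt_scherkU dot3_scherkU_scherkNormal h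
  have huv := dot3_pdV_scherkNormal σu_eq differentiableAt_scherkU dot3_scherkU_scherkNormal h
  have hvv := dot3_pdV_scherkNormal σv_eq differentiableAt_scherkV dot3_scherkV_scherkNormal h
  have key : (-dot3 (scherkU p) (-2, 0, 2 * p.1)) * (-dot3 (scherkV p) (0, -2, 2 * p.2))
      - (-dot3 (scherkU p) (0, -2, 2 * p.2)) ^ 2
      = -16 * (1 + p.1 ^ 2 + p.2 ^ 2) ^ 2 / (denP p.1 p.2 * denM p.1 p.2) := by
    simp only [dot3, scherkU, scherkV]
    field_simp
    unfold denP denM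
    ring
  have hh : h11 p * h22 p - h12 p ^ 2
      = (1 / (1 + p.1 ^ 2 + p.2 ^ 2)) ^ 2
        * (-16 * (1 + p.1 ^ 2 + p.2 ^ 2) ^ 2 / (denP p.1 p.2 * denM p.1 p.2)) := by
    rw [← key]
    simp only [h11, h12, h22, NS_eq h, dot3_smul_right, σuu, σuv, σvv, huu, huv, hvv]
    ring
  rw [κ, hh, detg_eq h, scherkFactor]
  field_simp
  norm_num

lemma secondVariation_integrand_eq (φ : ℝ × ℝ → ℝ) {p : ℝ × ℝ}
    (h : p.1 ^ 2 + p.2 ^ 2 - 1 ≠ 0) :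
    (ginv11 p * pdU φ p ^ 2 + 2 * ginv12 p * pdU φ p * pdV φ p + ginv22 p * pdV φ p ^ 2
      + 2 * κ p * φ p ^ 2) * Real.sqrt (detg p)
    = pdU φ p ^ 2 + pdV φ p ^ 2 - 8 * φ p ^ 2 / (1 + p.1 ^ 2 + p.2 ^ 2) ^ 2 := by
  have hpos := scherkFactor_pos h
  have hκ := κ_mul_scherkFactor h
  rw [ginv11, ginv12, ginv22, g11_eq h, g12_eq h, g22_eq h, detg_eq h, Real.sqrt_sq hpos.le]
  have e : 8 * φ p ^ 2 / (1 + p.1 ^ 2 + p.2 ^ 2) ^ 2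
      = -2 * φ p ^ 2 * (κ p * scherkFactor p) := by rw [hκ]; ring
  rw [e]
  field_simp
  ring

lemma ae_off_circle : ∀ᵐ p : ℝ × ℝ, p.1 ^ 2 + p.2 ^ 2 - 1 ≠ 0 := by
  have hm : MeasurableSet {p : ℝ × ℝ | p.1 ^ 2 + p.2 ^ 2 - 1 = 0} :=
    (isClosed_eq (by fun_prop) continuous_const).measurableSet
  have h0 : volume {p : ℝ × ℝ | p.1 ^ 2 + p.2 ^ 2 - 1 = 0} = 0 := by
    rw [Measure.volume_eq_prod, Measure.measure_prod_null hm]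
    refine .of_forall fun u => ?_
    refine (Set.Finite.subset (Set.toFinite {√(1 - u ^ 2), -√(1 - u ^ 2)}) ?_).measure_zero _
    intro v hv
    have hv' : u ^ 2 + v ^ 2 - 1 = 0 := hv
    have : v ^ 2 = √(1 - u ^ 2) ^ 2 := by
      rw [Real.sq_sqrt (by nlinarith)]; linarith
    simpa using sq_eq_sq_iff_eq_or_eq_neg.mp this
  simpa [ae_iff] using h0

/-- The Dirichlet integral is conformally invariant, so `Q` has a simple closed form. -/
lemma Q_eq (φ : ℝ × ℝ → ℝ) :
    Q φ = ∫ p in Ω₀, (pdU φ p ^ 2 + pdV φ p ^ 2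
      - 8 * φ p ^ 2 / (1 + p.1 ^ 2 + p.2 ^ 2) ^ 2) :=
  integral_congr_ae <| ae_restrict_of_ae <|
    ae_off_circle.mono fun _ hp => secondVariation_integrand_eq φ hp

lemma Continuous.integrableOn_Ω₀ {f : ℝ × ℝ → ℝ} (hf : Continuous f) : IntegrableOn f Ω₀ :=
  (hf.continuousOn.integrableOn_compact (isCompact_Icc.prod isCompact_Icc)).mono_set
    (Set.prod_mono Set.Ioo_subset_Icc_self Set.Ioo_subset_Icc_self)

lemma setIntegral_Ω₀_eq {f : ℝ × ℝ → ℝ} (hf : Continuous f) :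
    ∫ p in Ω₀, f p = ∫ u in (-1 : ℝ)..1, ∫ v in (-1 : ℝ)..1, f (u, v) := by
  have h := hf.integrableOn_Ω₀
  rw [Ω₀, Measure.volume_eq_prod] at *
  rw [setIntegral_prod _ h]
  simp only [intervalIntegral.integral_of_le (by norm_num : (-1 : ℝ) ≤ 1),
    integral_Ioc_eq_integral_Ioo]

/-- A cubic minorant of `s⁻²`: the difference is `(1 - 9s/8 + 3s²/10)² (1 + 9s/4) / s²`. -/
def invSqMinorant (s : ℝ) : ℝ :=
  1023 / 320 - 4509 / 1280 * s + 1143 / 800 * s ^ 2 - 81 / 400 * s ^ 3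

lemma invSqMinorant_le {s : ℝ} (hs : 0 < s) : invSqMinorant s ≤ 1 / s ^ 2 := by
  rw [le_div_iff₀ (by positivity), invSqMinorant]
  have : 0 ≤ (1 - 9 / 8 * s + 3 / 10 * s ^ 2) ^ 2 * (1 + 9 / 4 * s) := by positivity
  linarith

lemma integral_even_polynomial {n : ℕ} (c : Fin n → ℝ) :
    ∫ x in (-1 : ℝ)..1, ∑ i, c i * x ^ (2 * (i : ℕ)) = ∑ i, 2 * c i / (2 * (i : ℕ) + 1) := by
  rw [intervalIntegral.integral_finsetSum
    fun i _ => Continuous.intervalIntegrable (by fun_prop) _ _]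
  refine Finset.sum_congr rfl fun i _ => ?_
  rw [intervalIntegral.integral_const_mul, integral_pow, one_pow,
    Odd.neg_one_pow (odd_two_mul_add_one _)]
  push_cast
  ring

lemma setIntegral_phi2_neg :
    ∫ p in Ω₀, ((1 - 5 * p.1 ^ 4 / 4) ^ 2
      - 8 * (p.1 - p.1 ^ 5 / 4) ^ 2 / (1 + p.1 ^ 2 + p.2 ^ 2) ^ 2) < 0 := by
  have hc : Continuous fun p : ℝ × ℝ => (1 - 5 * p.1 ^ 4 / 4) ^ 2
      - 8 * (p.1 - p.1 ^ 5 / 4) ^ 2 / (1 + p.1 ^ 2 + p.2 ^ 2) ^ 2 := by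
    refine .sub (by fun_prop) (.div (by fun_prop) (by fun_prop) fun p => ?_)
    positivity
  have hc' : Continuous fun p : ℝ × ℝ => (1 - 5 * p.1 ^ 4 / 4) ^ 2
      - 8 * (p.1 - p.1 ^ 5 / 4) ^ 2 * invSqMinorant (1 + p.1 ^ 2 + p.2 ^ 2) := by
    unfold invSqMinorant
    fun_prop
  refine (setIntegral_mono hc.integrableOn_Ω₀ hc'.integrableOn_Ω₀ fun p => ?_).trans_lt ?_
  · have := mul_le_mul_of_nonneg_left
      (invSqMinorant_le (s := 1 + p.1 ^ 2 + p.2 ^ 2) (by positivity))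
      (by positivity : 0 ≤ 8 * (p.1 - p.1 ^ 5 / 4) ^ 2)
    dsimp only
    rw [mul_one_div] at this
    linarith
  rw [setIntegral_Ω₀_eq hc']
  have inner (u : ℝ) : ∫ v in (-1 : ℝ)..1, ((1 - 5 * u ^ 4 / 4) ^ 2
      - 8 * (u - u ^ 5 / 4) ^ 2 * invSqMinorant (1 + u ^ 2 + v ^ 2))
      = ∑ i, (![2, -8562 / 875, 17093 / 2000, -8763 / 1750, -1633 / 4000, 30369 / 7000,
          -24747 / 32000, -99 / 160, 81 / 400] : Fin 9 → ℝ) i * u ^ (2 * (i : ℕ)) := by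
    have h := integral_even_polynomial
      ![(1 - 5 * u ^ 4 / 4) ^ 2 - 8 * (u - u ^ 5 / 4) ^ 2 * invSqMinorant (1 + u ^ 2),
        -8 * (u - u ^ 5 / 4) ^ 2 *
          (-4509 / 1280 + 1143 / 400 * (1 + u ^ 2) - 243 / 400 * (1 + u ^ 2) ^ 2),
        -8 * (u - u ^ 5 / 4) ^ 2 * (1143 / 800 - 243 / 400 * (1 + u ^ 2)),
        8 * (u - u ^ 5 / 4) ^ 2 * (81 / 400)]
    simp only [Fin.sum_univ_succ, Fin.sum_univ_zero, Matrix.cons_val_zero, Matrix.cons_val_succ,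
      Fin.val_zero, Fin.val_succ] at h ⊢
    refine (intervalIntegral.integral_congr fun v _ => ?_).trans (h.trans ?_)
    · simp only [invSqMinorant]
      ring
    · simp only [invSqMinorant]
      norm_num
      ring
  simp only [inner, integral_even_polynomial]
  simp only [Fin.sum_univ_succ, Fin.sum_univ_zero, Matrix.cons_val_zero, Matrix.cons_val_succ,
    Fin.val_zero, Fin.val_succ]
  norm_num

lemma setIntegral_Ω₀_swap (f : ℝ × ℝ → ℝ) :
    ∫ p in Ω₀, f p.swap = ∫ p in Ω₀, f p := by
  rw [Ω₀, Measure.volume_eq_prod]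
  exact setIntegral_prod_swap _ _ f

lemma hasDerivAt_sub_pow_five (x : ℝ) :
    HasDerivAt (fun x : ℝ => x - x ^ 5 / 4) (1 - 5 * x ^ 4 / 4) x :=
  ((hasDerivAt_id x).sub ((hasDerivAt_pow 5 x).div_const 4)).congr_deriv (by norm_num)

/-- the second variation of the fundamental Scherk surface at
`φ²(u,v) = u − u⁵/4` and at `φ³(u,v) = v − v⁵/4` is negative. -/
theorem scherk_secondVariation_phi2_phi3_neg :
    Q (fun p => p.1 - p.1 ^ 5 / 4) < 0 ∧ Q (fun p => p.2 - p.2 ^ 5 / 4) < 0 := by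
  constructor
  · rw [Q_eq]
    simp only [pdU, pdV, (hasDerivAt_sub_pow_five _).deriv, deriv_const]
    simpa using setIntegral_phi2_neg
  · rw [Q_eq]
    simp only [pdU, pdV, (hasDerivAt_sub_pow_five _).deriv, deriv_const]
    rw [← setIntegral_Ω₀_swap]
    simpa [add_right_comm] using setIntegral_phi2_neg
end
end

section
/- The index of the complete dihedral Enneper surface of order 5 for compactly supported perturbations equals 9: ind_c(Σ₁⁵) = 9. -/
noncomputable section
open MeasureTheory Real

/-- The plane `ℝ²` as a Euclidean space. -/
abbrev E2 : Type := EuclideanSpace ℝ (Fin 2)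

/-- The point of `ℝ²` with Cartesian coordinates `(x, y)`. -/
def toE2 (x y : ℝ) : E2 := (WithLp.equiv 2 (Fin 2 → ℝ)).symm ![x, y]

/-- The second-variation quadratic form of the dihedral Enneper surface `Σ₁ⁿ(R)` of
order `n` and radius `R`, in the conformal planar coordinate `w`. -/
def QE (n : ℕ) (R : ℝ) (φ : E2 → ℝ) : ℝ :=
  ∫ w in Metric.ball (0 : E2) R,
    (‖gradient φ w‖ ^ 2 -
      (8 * (n : ℝ) ^ 2 * ‖w‖ ^ (2 * n - 2) / (1 + ‖w‖ ^ (2 * n)) ^ 2) * φ w ^ 2)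

/-- The second-variation quadratic form of the complete dihedral Enneper surface `Σ₁ⁿ`
(`R = ∞`). -/
def QEinf (n : ℕ) (φ : E2 → ℝ) : ℝ :=
  ∫ w : E2,
    (‖gradient φ w‖ ^ 2 -
      (8 * (n : ℝ) ^ 2 * ‖w‖ ^ (2 * n - 2) / (1 + ‖w‖ ^ (2 * n)) ^ 2) * φ w ^ 2)

/-- Membership in `F(B(0,R))`: smooth on the open ball `B(0,R)` with all partial
derivatives of order `≤ 2` bounded there. -/
def memFE (R : ℝ) (φ : E2 → ℝ) : Prop :=
  ContDiffOn ℝ (⊤ : ℕ∞) φ (Metric.ball (0 : E2) R) ∧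
    ∀ i : ℕ, i ≤ 2 → ∃ C : ℝ,
      ∀ w ∈ Metric.ball (0 : E2) R, ‖iteratedFDerivWithin ℝ i φ (Metric.ball (0 : E2) R) w‖ ≤ C

/-- The modified index `ind_b(Σ₁ⁿ(R))`: the supremum of the dimensions of
finite-dimensional subspaces of `F(B(0,R))` on which `Qⁿ_R` is negative definite. -/
def indbE (n : ℕ) (R : ℝ) : ℕ∞ :=
  sSup {d : ℕ∞ | ∃ V : Submodule ℝ (E2 → ℝ), FiniteDimensional ℝ V ∧
    (∀ φ ∈ V, memFE R φ) ∧ (∀ φ ∈ V, φ ≠ 0 → QE n R φ < 0) ∧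
    d = (Module.finrank ℝ V : ℕ∞)}

/-- The index `ind_c(Σ₁ⁿ)` of the complete dihedral Enneper surface of order `n` for
compactly supported perturbations: the supremum of the dimensions of finite-dimensional
subspaces of `C_c^∞(ℝ²)` on which `Qⁿ_∞` is negative definite. -/
def indcE (n : ℕ) : ℕ∞ :=
  sSup {d : ℕ∞ | ∃ V : Submodule ℝ (E2 → ℝ), FiniteDimensional ℝ V ∧
    (∀ φ ∈ V, ContDiff ℝ (⊤ : ℕ∞) φ ∧ HasCompactSupport φ) ∧
    (∀ φ ∈ V, φ ≠ 0 → QEinf n φ < 0) ∧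
    d = (Module.finrank ℝ V : ℕ∞)}

/-- The Hartley kernel `cos (mθ) + sin (mθ)`. -/
def cas (m : ℤ) (θ : ℝ) : ℝ := Real.cos (m * θ) + Real.sin (m * θ)

/-- The `m`-th (unnormalised) Hartley coefficient of a function on the circle. -/
def hartley (f : ℝ → ℝ) (m : ℤ) : ℝ := ∫ θ in (-π)..π, f θ * cas m θ

@[fun_prop]
lemma continuous_cas (m : ℤ) : Continuous (cas m) := by
  unfold cas; fun_prop

lemma hasDerivAt_cas (m : ℤ) (θ : ℝ) : HasDerivAt (cas m) (m * cas (-m) θ) θ := by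
  unfold cas
  have h : HasDerivAt (fun θ : ℝ => (m : ℝ) * θ) m θ := by
    simpa using (hasDerivAt_id θ).const_mul (m : ℝ)
  convert! h.cos.add h.sin using 1
  simp
  ring

lemma integral_cos_int_mul (m : ℤ) :
    ∫ θ in (-π)..π, Real.cos (m * θ) = if m = 0 then 2 * π else 0 := by
  split_ifs with h
  · simp [h]; ring
  · have hm : (m : ℝ) ≠ 0 := by exact_mod_cast h
    rw [intervalIntegral.integral_comp_mul_left _ hm]
    simp [mul_neg, Real.sin_int_mul_pi]

lemma integral_sin_int_mul (m : ℤ) : ∫ θ in (-π)..π, Real.sin (m * θ) = 0 := by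
  by_cases h : m = 0
  · simp [h]
  · have hm : (m : ℝ) ≠ 0 := by exact_mod_cast h
    rw [intervalIntegral.integral_comp_mul_left _ hm]
    simp [mul_neg]

lemma integral_cas_mul_cas (m n : ℤ) :
    ∫ θ in (-π)..π, cas m θ * cas n θ = if m = n then 2 * π else 0 := by
  have h : ∀ θ, cas m θ * cas n θ =
      Real.cos ((m - n : ℤ) * θ) + Real.sin ((m + n : ℤ) * θ) := by
    intro θ
    unfold cas
    push_cast
    rw [sub_mul, add_mul _ _ θ, Real.cos_sub, Real.sin_add]
    ring
  simp_rw [h]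
  rw [intervalIntegral.integral_add (Continuous.intervalIntegrable (by fun_prop) _ _)
    (Continuous.intervalIntegrable (by fun_prop) _ _), integral_cos_int_mul, integral_sin_int_mul]
  simp [sub_eq_zero]

lemma integral_sq_sum_cas {ι : Type*} (s : Finset ι) (c : ι → ℝ) {k : ι → ℤ}
    (hk : Function.Injective k) :
    ∫ θ in (-π)..π, (∑ m ∈ s, c m * cas (k m) θ) ^ 2 = 2 * π * ∑ m ∈ s, c m ^ 2 := by
  simp_rw [pow_two, Finset.sum_mul_sum]
  rw [intervalIntegral.integral_finsetSum
    (fun i _ => Continuous.intervalIntegrable (by fun_prop) _ _), Finset.mul_sum]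
  refine Finset.sum_congr rfl fun i hi => ?_
  rw [intervalIntegral.integral_finsetSum
    (fun i _ => Continuous.intervalIntegrable (by fun_prop) _ _), Finset.sum_eq_single i]
  · have : ∀ θ, c i * cas (k i) θ * (c i * cas (k i) θ) = (c i * c i) * (cas (k i) θ * cas (k i) θ) :=
      fun θ => by ring
    simp_rw [this]
    rw [intervalIntegral.integral_const_mul, integral_cas_mul_cas]
    simp; ring
  · intro j _ hj
    have : ∀ θ, c i * cas (k i) θ * (c j * cas (k j) θ) = (c i * c j) * (cas (k i) θ * cas (k j) θ) :=
      fun θ => by ring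
    simp_rw [this]
    rw [intervalIntegral.integral_const_mul, integral_cas_mul_cas]
    simp [hk.ne hj.symm]
  · exact fun h => absurd hi h

lemma neg_pi_lt_pi : -π < π := by linarith [Real.pi_pos]

/-- Squared moduli of Fourier coefficients in terms of Hartley coefficients. -/
lemma norm_sq_fourierCoeffOn {f : ℝ → ℝ} (hf : Continuous f) (m : ℤ) :
    ‖fourierCoeffOn neg_pi_lt_pi (fun θ => (f θ : ℂ)) m‖ ^ 2 =
      (hartley f m ^ 2 + hartley f (-m) ^ 2) / 2 / (2 * π) ^ 2 := by
  set C := ∫ θ in (-π)..π, f θ * Real.cos (m * θ) with hC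
  set D := ∫ θ in (-π)..π, f θ * Real.sin (m * θ) with hD
  have hp : hartley f m = C + D := by
    rw [hC, hD, ← intervalIntegral.integral_add (Continuous.intervalIntegrable (by fun_prop) _ _)
      (Continuous.intervalIntegrable (by fun_prop) _ _)]
    unfold hartley cas
    simp_rw [mul_add]
  have hn : hartley f (-m) = C - D := by
    rw [hC, hD, ← intervalIntegral.integral_sub (Continuous.intervalIntegrable (by fun_prop) _ _)
      (Continuous.intervalIntegrable (by fun_prop) _ _)]
    unfold hartley cas
    simp only [Int.cast_neg, neg_mul, Real.cos_neg, Real.sin_neg]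
    congr 1; ext θ; ring
  have key : fourierCoeffOn neg_pi_lt_pi (fun θ => (f θ : ℂ)) m =
      ((1 / (2 * π) : ℝ) : ℂ) * ((C : ℂ) - D * Complex.I) := by
    rw [fourierCoeffOn_eq_integral, hC, hD, ← intervalIntegral.integral_ofReal,
      ← intervalIntegral.integral_ofReal, ← intervalIntegral.integral_mul_const,
      ← intervalIntegral.integral_sub (Continuous.intervalIntegrable (by fun_prop) _ _)
      (Continuous.intervalIntegrable (by fun_prop) _ _), ← Complex.real_smul]
    congr 1
    · ring
    · congr 1
      ext θ
      rw [fourier_coe_apply, smul_eq_mul]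
      have : (2 * π * Complex.I * ((-m : ℤ) : ℂ) * θ / ((π - -π : ℝ) : ℂ)) =
          ((-(m * θ) : ℝ) : ℂ) * Complex.I := by
        have : (π : ℂ) ≠ 0 := by exact_mod_cast Real.pi_ne_zero
        push_cast
        field_simp
        ring
      rw [this, Complex.exp_mul_I, ← Complex.ofReal_cos, ← Complex.ofReal_sin, Real.cos_neg,
        Real.sin_neg]
      push_cast
      ring
  rw [key, hp, hn, norm_mul, mul_pow, Complex.norm_real, Real.norm_eq_abs, sq_abs,
    ← Complex.normSq_eq_norm_sq, Complex.normSq_apply]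
  simp
  field_simp
  ring

lemma hasSum_hartley_sq {f : ℝ → ℝ} (hf : Continuous f) :
    HasSum (fun m : ℤ => (hartley f m ^ 2 + hartley f (-m) ^ 2) / 2)
      (2 * π * ∫ θ in (-π)..π, f θ ^ 2) := by
  have h2 : MemLp (fun θ => (f θ : ℂ)) 2 (volume.restrict (Set.Ioc (-π) π)) := by
    have hc : Continuous (fun θ => (f θ : ℂ)) := by fun_prop
    have : IsFiniteMeasure (volume.restrict (Set.Ioc (-π) π)) := ⟨by simp⟩
    obtain ⟨K, hK⟩ := isCompact_Icc.exists_bound_of_continuousOn (s := Set.Icc (-π) π)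
      hc.continuousOn
    refine MemLp.of_bound hc.aestronglyMeasurable K ?_
    filter_upwards [ae_restrict_mem measurableSet_Ioc] with x hx
    exact hK x (Set.Ioc_subset_Icc_self hx)
  have h := (hasSum_sq_fourierCoeffOn neg_pi_lt_pi h2).mul_left ((2 * π) ^ 2)
  simp only [norm_sq_fourierCoeffOn hf] at h
  convert! h using 1
  · ext m
    field_simp
  · simp only [Complex.norm_real, Real.norm_eq_abs, sq_abs, smul_eq_mul]
    field_simp
    ring

lemma sum_Icc_symm (g : ℤ → ℝ) :
    ∑ m ∈ Finset.Icc (-4 : ℤ) 4, (g m + g (-m)) / 2 = ∑ m ∈ Finset.Icc (-4 : ℤ) 4, g m := by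
  have : Finset.Icc (-4 : ℤ) 4 = {-4, -3, -2, -1, 0, 1, 2, 3, 4} := by decide
  rw [this]
  simp
  ring

lemma hartley_bessel {f : ℝ → ℝ} (hf : Continuous f) :
    ∑ m ∈ Finset.Icc (-4 : ℤ) 4, hartley f m ^ 2 ≤ 2 * π * ∫ θ in (-π)..π, f θ ^ 2 := by
  rw [← sum_Icc_symm fun m => hartley f m ^ 2]
  exact sum_le_hasSum _ (fun m _ => by positivity) (hasSum_hartley_sq hf)

lemma hartley_deriv {f f' : ℝ → ℝ} (hf : ∀ θ, HasDerivAt f (f' θ) θ) (hf' : Continuous f')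
    (hper : f π = f (-π)) (m : ℤ) : hartley f' m = -m * hartley f (-m) := by
  unfold hartley
  have hc : Continuous f := continuous_iff_continuousAt.2 fun θ => (hf θ).continuousAt
  have hcas : cas m π = cas m (-π) := by
    simp [cas, Real.sin_int_mul_pi]
  have h := intervalIntegral.integral_mul_deriv_eq_deriv_mul
    (fun θ _ => hasDerivAt_cas m θ) (fun θ _ => hf θ)
    (Continuous.intervalIntegrable (by fun_prop) (-π) π) (hf'.intervalIntegrable _ _)
  rw [hper, hcas, sub_self, zero_sub] at h
  simp_rw [mul_comm (f' _)]
  rw [h, neg_mul, ← intervalIntegral.integral_const_mul]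
  congr 2
  ext θ
  ring

lemma hartley_wirtinger {f f' : ℝ → ℝ} (hf : ∀ θ, HasDerivAt f (f' θ) θ) (hf' : Continuous f')
    (hper : f π = f (-π)) :
    25 * (2 * π * (∫ θ in (-π)..π, f θ ^ 2) -
      ∑ m ∈ Finset.Icc (-4 : ℤ) 4, hartley f m ^ 2) ≤ 2 * π * ∫ θ in (-π)..π, f' θ ^ 2 := by
  have hc : Continuous f := continuous_iff_continuousAt.2 fun θ => (hf θ).continuousAt
  have h1 := hasSum_hartley_sq hc
  have h2 := hasSum_hartley_sq hf'
  have h3 : HasSum (fun m : ℤ => if m ∈ Finset.Icc (-4 : ℤ) 4 then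
      (hartley f m ^ 2 + hartley f (-m) ^ 2) / 2 else 0)
      (∑ m ∈ Finset.Icc (-4 : ℤ) 4, hartley f m ^ 2) := by
    rw [← sum_Icc_symm fun m => hartley f m ^ 2]
    rw [Finset.sum_congr rfl fun m hm => (if_pos hm).symm]
    exact hasSum_sum_of_ne_finset_zero fun m hm => if_neg hm
  refine hasSum_le (fun m => ?_) ((h1.sub h3).mul_left 25) h2
  rw [hartley_deriv hf hf' hper, hartley_deriv hf hf' hper]
  simp only [neg_neg]
  split_ifs with hm
  · simp; positivity
  · have : (25 : ℝ) ≤ (m : ℝ) ^ 2 := by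
      have : (25 : ℤ) ≤ m ^ 2 := by
        rw [Finset.mem_Icc, not_and_or, not_le, not_le] at hm
        rcases hm with hm | hm <;> nlinarith
      exact_mod_cast this
    push_cast
    nlinarith [sq_nonneg (hartley f m), sq_nonneg (hartley f (-m))]

/-- The point of the plane with polar coordinates `(r, θ)`. -/
def polarPt (r θ : ℝ) : E2 := toE2 (r * Real.cos θ) (r * Real.sin θ)

lemma toE2_eq (x y : ℝ) : toE2 x y = x • toE2 1 0 + y • toE2 0 1 := by
  ext i
  fin_cases i <;> simp [toE2]

@[fun_prop]
lemma contDiff_toE2 {n : WithTop ℕ∞} {X : Type*} [NormedAddCommGroup X] [NormedSpace ℝ X]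
    {f g : X → ℝ} (hf : ContDiff ℝ n f) (hg : ContDiff ℝ n g) :
    ContDiff ℝ n fun x => toE2 (f x) (g x) := by
  simp_rw [fun x => toE2_eq (f x) (g x)]
  fun_prop

@[fun_prop]
lemma continuous_toE2 {X : Type*} [TopologicalSpace X] {f g : X → ℝ} (hf : Continuous f)
    (hg : Continuous g) : Continuous fun x => toE2 (f x) (g x) := by
  simp_rw [fun x => toE2_eq (f x) (g x)]
  fun_prop

@[fun_prop]
lemma Continuous.polarPt {X : Type*} [TopologicalSpace X] {f g : X → ℝ} (hf : Continuous f)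
    (hg : Continuous g) : Continuous fun x => polarPt (f x) (g x) := by
  unfold _root_.polarPt
  fun_prop

lemma norm_sq_toE2 (x y : ℝ) : ‖toE2 x y‖ ^ 2 = x ^ 2 + y ^ 2 := by
  simp [toE2, EuclideanSpace.norm_sq_eq]

lemma norm_polarPt {r : ℝ} (hr : 0 ≤ r) (θ : ℝ) : ‖polarPt r θ‖ = r := by
  rw [← sq_eq_sq₀ (norm_nonneg _) hr, polarPt, norm_sq_toE2]
  nlinarith [Real.sin_sq_add_cos_sq θ]

lemma hasDerivAt_polarPt_radius (r θ : ℝ) :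
    HasDerivAt (fun r => polarPt r θ) (toE2 (Real.cos θ) (Real.sin θ)) r := by
  have h : (fun r => polarPt r θ) = fun r => r • toE2 (Real.cos θ) (Real.sin θ) := by
    ext r i
    fin_cases i <;> simp [polarPt, toE2]
  rw [h]
  simpa using (hasDerivAt_id r).smul_const (toE2 (Real.cos θ) (Real.sin θ))

lemma hasDerivAt_polarPt_angle (r θ : ℝ) :
    HasDerivAt (fun θ => polarPt r θ) (r • toE2 (-Real.sin θ) (Real.cos θ)) θ := by
  have h : (fun θ => polarPt r θ) =
      fun θ => (r * Real.cos θ) • toE2 1 0 + (r * Real.sin θ) • toE2 0 1 := by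
    ext θ : 1
    exact toE2_eq _ _
  rw [h]
  have h1 := ((Real.hasDerivAt_cos θ).const_mul r).smul_const (toE2 1 0)
  have h2 := ((Real.hasDerivAt_sin θ).const_mul r).smul_const (toE2 0 1)
  convert! h1.add h2 using 1
  rw [toE2_eq, smul_add, smul_smul, smul_smul]

/-- The radial derivative of `φ` at the point with polar coordinates `(r, θ)`. -/
def radialDeriv (φ : E2 → ℝ) (r θ : ℝ) : ℝ :=
  fderiv ℝ φ (polarPt r θ) (toE2 (Real.cos θ) (Real.sin θ))

/-- The derivative of `φ` in the unit angular direction at the point with polar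
coordinates `(r, θ)`. -/
def angularDeriv (φ : E2 → ℝ) (r θ : ℝ) : ℝ :=
  fderiv ℝ φ (polarPt r θ) (toE2 (-Real.sin θ) (Real.cos θ))

lemma hasDerivAt_radius {φ : E2 → ℝ} (hφ : ContDiff ℝ (⊤ : ℕ∞) φ) (r θ : ℝ) :
    HasDerivAt (fun r => φ (polarPt r θ)) (radialDeriv φ r θ) r :=
  ((hφ.differentiable (by simp)) _).hasFDerivAt.comp_hasDerivAt r (hasDerivAt_polarPt_radius r θ)

lemma hasDerivAt_angle {φ : E2 → ℝ} (hφ : ContDiff ℝ (⊤ : ℕ∞) φ) (r θ : ℝ) :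
    HasDerivAt (fun θ => φ (polarPt r θ)) (r * angularDeriv φ r θ) θ := by
  have h := ((hφ.differentiable (by simp)) _).hasFDerivAt.comp_hasDerivAt θ
    (hasDerivAt_polarPt_angle r θ)
  rw [map_smul, smul_eq_mul] at h
  exact h

lemma continuous_radialDeriv {φ : E2 → ℝ} (hφ : ContDiff ℝ (⊤ : ℕ∞) φ) :
    Continuous fun p : ℝ × ℝ => radialDeriv φ p.1 p.2 := by
  have h := hφ.continuous_fderiv (by simp)
  unfold radialDeriv
  fun_prop

lemma continuous_angularDeriv {φ : E2 → ℝ} (hφ : ContDiff ℝ (⊤ : ℕ∞) φ) :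
    Continuous fun p : ℝ × ℝ => angularDeriv φ p.1 p.2 := by
  have h := hφ.continuous_fderiv (by simp)
  unfold angularDeriv
  fun_prop

lemma norm_sq_gradient_polarPt (φ : E2 → ℝ) (r θ : ℝ) :
    ‖gradient φ (polarPt r θ)‖ ^ 2 = radialDeriv φ r θ ^ 2 + angularDeriv φ r θ ^ 2 := by
  unfold radialDeriv angularDeriv
  rw [← inner_gradient_left (𝕜 := ℝ), ← inner_gradient_left (𝕜 := ℝ), EuclideanSpace.norm_sq_eq]
  simp [toE2, PiLp.inner_apply, -inner_gradient_left]
  linear_combination (-(gradient φ (polarPt r θ) 0) ^ 2 - (gradient φ (polarPt r θ) 1) ^ 2) *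
    Real.sin_sq_add_cos_sq θ

lemma continuous_gradient {φ : E2 → ℝ} (hφ : ContDiff ℝ (⊤ : ℕ∞) φ) :
    Continuous (gradient φ) :=
  (InnerProductSpace.toDual ℝ E2).symm.continuous.comp (hφ.continuous_fderiv (by simp))

lemma integral_eq_polar {f : E2 → ℝ} (hf : Continuous f) {M : ℝ} (hM0 : 0 ≤ M)
    (hM : ∀ w, M ≤ ‖w‖ → f w = 0) :
    ∫ w, f w = ∫ r in (0)..M, ∫ θ in (-π)..π, r * f (polarPt r θ) := by
  have h1 : ∫ w, f w = ∫ p : ℝ × ℝ, f (toE2 p.1 p.2) := by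
    have := ((PiLp.volume_preserving_toLp (Fin 2)).comp
      (volume_preserving_finTwoArrow ℝ).symm).integral_comp
      ((MeasurableEquiv.toLp 2 (Fin 2 → ℝ)).measurableEmbedding.comp
        (MeasurableEquiv.finTwoArrow (α := ℝ)).symm.measurableEmbedding) f
    rw [← this]
    rfl
  rw [h1, ← integral_comp_polarCoord_symm]
  have hcont : Continuous fun p : ℝ × ℝ => p.1 * f (polarPt p.1 p.2) := by fun_prop
  have hsub : Set.Ioc 0 M ×ˢ Set.Ioo (-π) π ⊆ polarCoord.target :=
    Set.prod_mono Set.Ioc_subset_Ioi_self subset_rfl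
  have h2 : ∫ p in polarCoord.target, p.1 • f (toE2 (polarCoord.symm p).1 (polarCoord.symm p).2) =
      ∫ p in Set.Ioc 0 M ×ˢ Set.Ioo (-π) π, p.1 * f (polarPt p.1 p.2) := by
    refine setIntegral_eq_of_subset_of_forall_sdiff_eq_zero
      polarCoord.open_target.measurableSet hsub ?_
    rintro ⟨r, θ⟩ ⟨⟨hr, hθ⟩, hn⟩
    have hr' : M < r := by
      by_contra hlt
      exact hn ⟨⟨hr, not_lt.1 hlt⟩, hθ⟩
    have : f (polarPt r θ) = 0 := hM _ (by rw [norm_polarPt (le_of_lt hr)]; exact hr'.le)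
    simpa [polarPt] using Or.inr this
  rw [h2, Measure.volume_eq_prod, setIntegral_prod, intervalIntegral.integral_of_le hM0]
  · simp_rw [intervalIntegral.integral_of_le neg_pi_lt_pi.le, integral_Ioc_eq_integral_Ioo]
  · exact (hcont.continuousOn.integrableOn_compact
      (isCompact_Icc.prod isCompact_Icc)).mono_set
      (Set.prod_mono Set.Ioc_subset_Icc_self Set.Ioo_subset_Icc_self)

lemma hasDerivAt_integral_param {F F' : ℝ → ℝ → ℝ} (hF : ∀ r, Continuous (F r))
    (hF' : Continuous fun p : ℝ × ℝ => F' p.1 p.2)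
    (h : ∀ r θ, HasDerivAt (fun r => F r θ) (F' r θ) r) (a b r : ℝ) :
    HasDerivAt (fun r => ∫ θ in a..b, F r θ) (∫ θ in a..b, F' r θ) r := by
  obtain ⟨K, hK⟩ := (isCompact_Icc.prod isCompact_uIcc).exists_bound_of_continuousOn
    (s := Set.Icc (r - 1) (r + 1) ×ˢ Set.uIcc a b) hF'.continuousOn
  refine (intervalIntegral.hasDerivAt_integral_of_dominated_loc_of_deriv_le
    (s := Set.Icc (r - 1) (r + 1)) (bound := fun _ => K)
    (Icc_mem_nhds (by linarith) (by linarith))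
    (Filter.Eventually.of_forall fun x => (hF x).aestronglyMeasurable)
    ((hF r).intervalIntegrable _ _) ?_ ?_ ?_ ?_).2
  · exact Continuous.aestronglyMeasurable (by fun_prop)
  · exact Filter.Eventually.of_forall fun t ht x hx =>
      hK (x, t) ⟨hx, Set.uIoc_subset_uIcc ht⟩
  · exact intervalIntegrable_const
  · exact Filter.Eventually.of_forall fun t _ x _ => h x t

/-- The weight `sech² / tanh`, in the variable `r` with `τ = 5 log r`. -/
def innerWeight (r : ℝ) : ℝ := 4 * r ^ 10 / (r ^ 20 - 1)

/-- The function `tanh τ`, in the variable `r` with `τ = 5 log r`. -/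
def outerWeight (r : ℝ) : ℝ := (r ^ 10 - 1) / (r ^ 10 + 1)

lemma hasDerivAt_outerWeight (r : ℝ) :
    HasDerivAt outerWeight (20 * r ^ 9 / (r ^ 10 + 1) ^ 2) r := by
  have hne : r ^ 10 + 1 ≠ 0 := by positivity
  have h := ((hasDerivAt_pow 10 r).sub_const 1).div ((hasDerivAt_pow 10 r).add_const 1) hne
  convert! h using 1
  push_cast
  ring

lemma hasDerivAt_innerWeight {r : ℝ} (hr : r ^ 20 - 1 ≠ 0) :
    HasDerivAt innerWeight (-40 * r ^ 9 * (r ^ 20 + 1) / (r ^ 20 - 1) ^ 2) r := by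
  have h := ((hasDerivAt_pow 10 r).const_mul 4).div ((hasDerivAt_pow 20 r).sub_const 1) hr
  convert! h using 1
  push_cast
  ring

lemma pow_twenty_sub_one_ne_zero {r : ℝ} (h0 : 0 ≤ r) (h1 : r ≠ 1) : r ^ 20 - 1 ≠ 0 := by
  rw [sub_ne_zero]
  exact fun h => h1 ((pow_eq_one_iff_of_nonneg h0 (by norm_num)).1 h)

/-- A simple zero of `a` at `1` compensates the pole of the weight. -/
lemma continuousOn_innerWeight_mul_sq {a a' : ℝ → ℝ} (ha : ∀ r, HasDerivAt a (a' r) r)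
    (h1 : a 1 = 0) : ContinuousOn (fun r => innerWeight r * a r ^ 2) (Set.Ici 0) := by
  intro x hx
  refine ContinuousAt.continuousWithinAt ?_
  by_cases hx1 : x = 1
  · subst hx1
    have hds : ContinuousAt (dslope a 1) 1 :=
      continuousAt_dslope_same.2 (ha 1).differentiableAt
    have hq : ((1 : ℝ) ^ 10 + 1) * ∑ i ∈ Finset.range 10, (1 : ℝ) ^ i ≠ 0 := by norm_num
    have hG : ContinuousAt (fun r => 4 * r ^ 10 / ((r ^ 10 + 1) * ∑ i ∈ Finset.range 10, r ^ i) *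
        (dslope a 1 r * a r)) 1 := by
      refine ContinuousAt.mul (ContinuousAt.div (by fun_prop) (by fun_prop) hq)
        (hds.mul (ha 1).continuousAt)
    refine hG.congr ?_
    filter_upwards [lt_mem_nhds (zero_lt_one : (0 : ℝ) < 1)] with r hr
    by_cases hr1 : r = 1
    · simp [hr1, h1]
    · have hsub : r - 1 ≠ 0 := sub_ne_zero.2 hr1
      have hd : dslope a 1 r = a r / (r - 1) := by
        rw [dslope_of_ne _ hr1, slope_def_field, h1, sub_zero]
      have hgeom : (∑ i ∈ Finset.range 10, r ^ i) * (r - 1) = r ^ 10 - 1 := geom_sum_mul r 10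
      have hpos : 0 < ∑ i ∈ Finset.range 10, r ^ i :=
        Finset.sum_pos (fun i _ => by positivity) (by simp)
      have h20 : r ^ 20 - 1 = (r ^ 10 + 1) * ((∑ i ∈ Finset.range 10, r ^ i) * (r - 1)) := by
        rw [hgeom]; ring
      rw [hd, innerWeight, h20]
      field_simp
  · exact (hasDerivAt_innerWeight (pow_twenty_sub_one_ne_zero hx hx1)).continuousAt.mul
      ((ha x).continuousAt.pow 2)

lemma radial_form_nonneg {s : Finset ℤ} {a a' : ℤ → ℝ → ℝ} {X Y Z W : ℝ → ℝ} {M : ℝ}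
    (hM : 1 ≤ M) (ha : ∀ m r, HasDerivAt (a m) (a' m r) r)
    (hZ : ∀ r, HasDerivAt Z (2 * Y r) r) (hX : Continuous X) (hW : Continuous W)
    (bessel : ∀ r l, ∑ m ∈ s, (a' m r + l * a m r) ^ 2 ≤ X r + 2 * l * Y r + l ^ 2 * Z r)
    (wirtinger : ∀ r, 25 * (Z r - ∑ m ∈ s, a m r ^ 2) ≤ r ^ 2 * W r)
    (h0 : Z 0 = ∑ m ∈ s, a m 0 ^ 2) (h1 : ∀ m ∈ s, a m 1 = 0)
    (haM : ∀ m ∈ s, a m M = 0) (hZM : Z M = 0) :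
    0 ≤ ∫ r in (0)..M, (r * X r + r * W r - 200 * r ^ 9 / (1 + r ^ 10) ^ 2 * Z r) := by
  set F : ℝ → ℝ := fun r => r * X r + r * W r - 200 * r ^ 9 / (1 + r ^ 10) ^ 2 * Z r with hF
  have hZc : Continuous Z := continuous_iff_continuousAt.2 fun r => (hZ r).continuousAt
  have hac : ∀ m, Continuous (a m) := fun m =>
    continuous_iff_continuousAt.2 fun r => (ha m r).continuousAt
  have hTc : Continuous outerWeight :=
    continuous_iff_continuousAt.2 fun r => (hasDerivAt_outerWeight r).continuousAt
  have hFc : Continuous F := by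
    have : Continuous fun r : ℝ => 200 * r ^ 9 / (1 + r ^ 10) ^ 2 :=
      Continuous.div (by fun_prop) (by fun_prop) fun r => by positivity
    fun_prop
  set B : ℝ → ℝ := fun r => -5 * outerWeight r * (Z r - ∑ m ∈ s, a m r ^ 2) +
    5 * ∑ m ∈ s, innerWeight r * a m r ^ 2 with hB
  have hBc : ContinuousOn B (Set.Ici 0) := by
    refine ContinuousOn.add (Continuous.continuousOn (by fun_prop)) (continuousOn_const.mul ?_)
    exact continuousOn_finsetSum _ fun m hm => continuousOn_innerWeight_mul_sq (ha m) (h1 m hm)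
  set S1 : ℝ → ℝ := fun r => ∑ m ∈ s, a m r * a' m r with hS1
  set B' : ℝ → ℝ := fun r =>
    -5 * (20 * r ^ 9 / (r ^ 10 + 1) ^ 2) * (Z r - ∑ m ∈ s, a m r ^ 2) +
    -5 * outerWeight r * (2 * Y r - 2 * S1 r) +
    (5 * (-40 * r ^ 9 * (r ^ 20 + 1) / (r ^ 20 - 1) ^ 2) * (∑ m ∈ s, a m r ^ 2) +
      5 * innerWeight r * (2 * S1 r)) with hB'
  have hS : ∀ r, HasDerivAt (fun r => ∑ m ∈ s, a m r ^ 2) (2 * S1 r) r := by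
    intro r
    rw [hS1, Finset.mul_sum]
    refine HasDerivAt.fun_sum fun m _ => ?_
    convert! (ha m r).pow 2 using 1
    push_cast; ring
  have hBd : ∀ r, 0 < r → r ≠ 1 → HasDerivAt B (B' r) r := by
    intro r hr hr1
    have hK := hasDerivAt_innerWeight (pow_twenty_sub_one_ne_zero hr.le hr1)
    have := (((hasDerivAt_outerWeight r).const_mul (-5)).mul ((hZ r).sub (hS r))).add
      ((hK.const_mul 5).mul (hS r))
    convert! this using 1
    ext r
    simp only [hB, Pi.add_apply, Pi.mul_apply, Pi.sub_apply]
    rw [← Finset.mul_sum]; ring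
  have hle : ∀ r, 0 < r → r ≠ 1 → B' r ≤ F r := by
    intro r hr hr1
    have hne := pow_twenty_sub_one_ne_zero hr.le hr1
    have hne1 : r ^ 10 - 1 ≠ 0 := by
      intro h; apply hne; linear_combination (r ^ 10 + 1) * h
    have hne2 : r ^ 10 + 1 ≠ 0 := by positivity
    have expand : ∀ l, ∑ m ∈ s, (a' m r + l * a m r) ^ 2 =
        ∑ m ∈ s, a' m r ^ 2 + 2 * l * S1 r + l ^ 2 * ∑ m ∈ s, a m r ^ 2 := by
      intro l
      rw [hS1, Finset.mul_sum, Finset.mul_sum, ← Finset.sum_add_distrib, ← Finset.sum_add_distrib]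
      exact Finset.sum_congr rfl fun m _ => by ring
    have b1 := bessel r (5 * outerWeight r / r)
    have b2 : 0 ≤ ∑ m ∈ s, (a' m r + -(5 * innerWeight r / r) * a m r) ^ 2 :=
      Finset.sum_nonneg fun m _ => sq_nonneg _
    have b3 := wirtinger r
    rw [expand] at b1 b2
    simp only [hF, hB']
    set S := ∑ m ∈ s, a m r ^ 2
    set S2 := ∑ m ∈ s, a' m r ^ 2
    have e1 : -(r * (5 * outerWeight r / r) ^ 2) + 25 / r - 200 * r ^ 9 / (1 + r ^ 10) ^ 2 =
        -5 * (20 * r ^ 9 / (r ^ 10 + 1) ^ 2) := by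
      have : 1 + r ^ 10 ≠ 0 := by positivity
      unfold outerWeight; field_simp; ring
    have e2 : -(r * (5 * innerWeight r / r) ^ 2) - 200 * r ^ 9 / (1 + r ^ 10) ^ 2 =
        5 * (-40 * r ^ 9 * (r ^ 20 + 1) / (r ^ 20 - 1) ^ 2) := by
      have h20 : r ^ 20 - 1 = (r ^ 10 + 1) * (r ^ 10 - 1) := by ring
      have : 1 + r ^ 10 = r ^ 10 + 1 := by ring
      unfold innerWeight; rw [h20, this]; field_simp; ring
    have e3 : r * (5 * outerWeight r / r) = 5 * outerWeight r := by field_simp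
    have e4 : r * (5 * innerWeight r / r) = 5 * innerWeight r := by field_simp
    have b3' : 25 / r * (Z r - S) ≤ r * W r := by
      rw [div_mul_eq_mul_div, div_le_iff₀ hr]; linarith
    rw [← e1, ← e2]
    have b1' := mul_le_mul_of_nonneg_left b1 hr.le
    have b2' := mul_nonneg hr.le b2
    have i1 : -5 * outerWeight r * (2 * Y r - 2 * S1 r) =
      -(r * (5 * outerWeight r / r)) * (2 * Y r - 2 * S1 r) := by rw [e3]; ring
    have i2 : 5 * innerWeight r * (2 * S1 r) = r * (5 * innerWeight r / r) * (2 * S1 r) := by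
      rw [e4]
    rw [i1, i2]
    nlinarith [b1', b2', b3']
  have hint : ∀ u v, IntegrableOn F (Set.Icc u v) := fun u v =>
    hFc.continuousOn.integrableOn_compact isCompact_Icc
  have i1 : B 1 - B 0 ≤ ∫ r in (0)..1, F r :=
    intervalIntegral.sub_le_integral_of_hasDeriv_right_of_le zero_le_one
      (hBc.mono Set.Icc_subset_Ici_self)
      (fun r hr => (hBd r hr.1 hr.2.ne).hasDerivWithinAt) (hint 0 1)
      fun r hr => hle r hr.1 hr.2.ne
  have i2 : B M - B 1 ≤ ∫ r in (1)..M, F r :=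
    intervalIntegral.sub_le_integral_of_hasDeriv_right_of_le hM
      (hBc.mono (Set.Icc_subset_Ici_self.trans (Set.Ici_subset_Ici.2 zero_le_one)))
      (fun r hr => (hBd r (zero_lt_one.trans hr.1) hr.1.ne').hasDerivWithinAt) (hint 1 M)
      fun r hr => hle r (zero_lt_one.trans hr.1) hr.1.ne'
  have hB0 : B 0 = 0 := by
    simp [hB, h0, innerWeight]
  have hBM : B M = 0 := by
    have : ∑ m ∈ s, a m M ^ 2 = 0 := Finset.sum_eq_zero fun m hm => by simp [haM m hm]
    simp only [hB, ← Finset.mul_sum, this, hZM]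
    simp
  rw [← intervalIntegral.integral_add_adjacent_intervals (b := 1)
    (hFc.intervalIntegrable _ _) (hFc.intervalIntegrable _ _)]
  linarith

lemma QEinf_five_eq_polar {φ : E2 → ℝ} (hφ : ContDiff ℝ (⊤ : ℕ∞) φ) {M : ℝ} (hM0 : 0 ≤ M)
    (hM : ∀ w, M ≤ ‖w‖ → w ∉ tsupport φ) :
    QEinf 5 φ = ∫ r in (0)..M, (r * (∫ θ in (-π)..π, radialDeriv φ r θ ^ 2) +
      r * (∫ θ in (-π)..π, angularDeriv φ r θ ^ 2) -
      200 * r ^ 9 / (1 + r ^ 10) ^ 2 * ∫ θ in (-π)..π, φ (polarPt r θ) ^ 2) := by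
  have hg := continuous_gradient hφ
  have hφc := hφ.continuous
  unfold QEinf
  rw [integral_eq_polar _ hM0]
  · refine intervalIntegral.integral_congr fun r hr => ?_
    rw [Set.uIcc_of_le hM0] at hr
    have hu : Continuous fun θ => radialDeriv φ r θ :=
      (continuous_radialDeriv hφ).comp (by fun_prop : Continuous fun θ : ℝ => (r, θ))
    have hv : Continuous fun θ => angularDeriv φ r θ :=
      (continuous_angularDeriv hφ).comp (by fun_prop : Continuous fun θ : ℝ => (r, θ))
    simp only [norm_sq_gradient_polarPt, norm_polarPt hr.1]
    rw [← intervalIntegral.integral_const_mul, ← intervalIntegral.integral_const_mul,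
      ← intervalIntegral.integral_const_mul,
      ← intervalIntegral.integral_add (Continuous.intervalIntegrable (by fun_prop) _ _)
        (Continuous.intervalIntegrable (by fun_prop) _ _),
      ← intervalIntegral.integral_sub (Continuous.intervalIntegrable (by fun_prop) _ _)
        (Continuous.intervalIntegrable (by fun_prop) _ _)]
    refine intervalIntegral.integral_congr fun θ _ => ?_
    norm_num
    ring
  · intro w hw
    have h1 : φ w = 0 := image_eq_zero_of_notMem_tsupport (hM w hw)
    have h2 : fderiv ℝ φ w = 0 :=
      Function.notMem_support.1 fun h => hM w hw (support_fderiv_subset ℝ h)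
    simp [gradient, h1, h2]
  · have : Continuous fun w : E2 =>
        8 * ((5 : ℕ) : ℝ) ^ 2 * ‖w‖ ^ (2 * 5 - 2) / (1 + ‖w‖ ^ (2 * 5)) ^ 2 :=
      Continuous.div (by fun_prop) (by fun_prop) fun w => by positivity
    fun_prop

lemma HasCompactSupport.exists_radius {φ : E2 → ℝ} (h : HasCompactSupport φ) (R : ℝ) :
    ∃ M, R ≤ M ∧ ∀ w, M ≤ ‖w‖ → w ∉ tsupport φ := by
  obtain ⟨K, hK⟩ := h.isCompact.isBounded.exists_norm_le
  refine ⟨max R (K + 1), le_max_left _ _, fun w hw hmem => ?_⟩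
  have := hK w hmem
  have := (le_max_right R (K + 1)).trans hw
  linarith

lemma QEinf_five_nonneg {φ : E2 → ℝ} (hφ : ContDiff ℝ (⊤ : ℕ∞) φ) (hc : HasCompactSupport φ)
    (h1 : ∀ m ∈ Finset.Icc (-4 : ℤ) 4, hartley (fun θ => φ (polarPt 1 θ)) m = 0) :
    0 ≤ QEinf 5 φ := by
  obtain ⟨M, hM1, hM⟩ := hc.exists_radius 1
  have hM0 : 0 ≤ M := zero_le_one.trans hM1
  have hψM : ∀ θ, φ (polarPt M θ) = 0 := fun θ =>
    image_eq_zero_of_notMem_tsupport (hM _ (norm_polarPt hM0 θ).ge)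
  have hφc := hφ.continuous
  have hu := continuous_radialDeriv hφ
  have hv := continuous_angularDeriv hφ
  have hur : ∀ r, Continuous fun θ => radialDeriv φ r θ := fun r =>
    hu.comp (by fun_prop : Continuous fun θ : ℝ => (r, θ))
  have hvr : ∀ r, Continuous fun θ => angularDeriv φ r θ := fun r =>
    hv.comp (by fun_prop : Continuous fun θ : ℝ => (r, θ))
  have ha : ∀ (m : ℤ) (r : ℝ), HasDerivAt (fun r => hartley (fun θ => φ (polarPt r θ)) m)
      (hartley (fun θ => radialDeriv φ r θ) m) r := fun m r =>
    hasDerivAt_integral_param (F := fun r θ => φ (polarPt r θ) * cas m θ)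
      (F' := fun r θ => radialDeriv φ r θ * cas m θ) (fun r => by fun_prop) (by fun_prop)
      (fun r θ => (hasDerivAt_radius hφ r θ).mul_const _) _ _ r
  have hZ : ∀ r, HasDerivAt (fun r => 2 * π * ∫ θ in (-π)..π, φ (polarPt r θ) ^ 2)
      (2 * (2 * π * ∫ θ in (-π)..π, φ (polarPt r θ) * radialDeriv φ r θ)) r := by
    intro r
    have := (hasDerivAt_integral_param (F := fun r θ => φ (polarPt r θ) ^ 2)
      (F' := fun r θ => 2 * (φ (polarPt r θ) * radialDeriv φ r θ)) (fun r => by fun_prop)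
      (by fun_prop) (fun r θ => ?_) (-π) π r).const_mul (2 * π)
    · convert! this using 1
      rw [intervalIntegral.integral_const_mul]
      ring
    · convert! (hasDerivAt_radius hφ r θ).pow 2 using 1
      push_cast; ring
  have key := radial_form_nonneg (s := Finset.Icc (-4 : ℤ) 4) hM1 ha hZ
    (X := fun r => 2 * π * ∫ θ in (-π)..π, radialDeriv φ r θ ^ 2)
    (W := fun r => 2 * π * ∫ θ in (-π)..π, angularDeriv φ r θ ^ 2)
    (continuous_const.mul (intervalIntegral.continuous_parametric_intervalIntegral_of_continuous'
      (f := fun r θ => radialDeriv φ r θ ^ 2) (by fun_prop) _ _))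
    (continuous_const.mul (intervalIntegral.continuous_parametric_intervalIntegral_of_continuous'
      (f := fun r θ => angularDeriv φ r θ ^ 2) (by fun_prop) _ _))
    ?_ ?_ ?_ h1 ?_ ?_
  · rw [QEinf_five_eq_polar hφ hM0 hM]
    have h2 : ∀ r : ℝ, r * (2 * π * ∫ θ in (-π)..π, radialDeriv φ r θ ^ 2) +
        r * (2 * π * ∫ θ in (-π)..π, angularDeriv φ r θ ^ 2) -
        200 * r ^ 9 / (1 + r ^ 10) ^ 2 * (2 * π * ∫ θ in (-π)..π, φ (polarPt r θ) ^ 2) =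
        2 * π * (r * (∫ θ in (-π)..π, radialDeriv φ r θ ^ 2) +
        r * (∫ θ in (-π)..π, angularDeriv φ r θ ^ 2) -
        200 * r ^ 9 / (1 + r ^ 10) ^ 2 * ∫ θ in (-π)..π, φ (polarPt r θ) ^ 2) := fun r => by ring
    simp_rw [h2] at key
    rw [intervalIntegral.integral_const_mul] at key
    exact nonneg_of_mul_nonneg_right key (by positivity)
  · intro r l
    have hb := hartley_bessel (f := fun θ => radialDeriv φ r θ + l * φ (polarPt r θ)) (by fun_prop)
    convert! hb using 1
    · refine Finset.sum_congr rfl fun m _ => ?_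
      unfold hartley
      rw [← intervalIntegral.integral_const_mul,
        ← intervalIntegral.integral_add (Continuous.intervalIntegrable (by fun_prop) _ _)
          (Continuous.intervalIntegrable (by fun_prop) _ _)]
      congr 2
      ext θ
      ring
    · have h3 : ∀ θ, (radialDeriv φ r θ + l * φ (polarPt r θ)) ^ 2 =
          radialDeriv φ r θ ^ 2 + (2 * l) * (φ (polarPt r θ) * radialDeriv φ r θ) +
            l ^ 2 * φ (polarPt r θ) ^ 2 := fun θ => by ring
      simp_rw [h3]
      rw [intervalIntegral.integral_add (Continuous.intervalIntegrable (by fun_prop) _ _)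
          (Continuous.intervalIntegrable (by fun_prop) _ _),
        intervalIntegral.integral_add (Continuous.intervalIntegrable (by fun_prop) _ _)
          (Continuous.intervalIntegrable (by fun_prop) _ _),
        intervalIntegral.integral_const_mul, intervalIntegral.integral_const_mul]
      ring
  · intro r
    have hw := hartley_wirtinger (hasDerivAt_angle hφ r) (by fun_prop) (by simp [polarPt])
    simp_rw [mul_pow, intervalIntegral.integral_const_mul] at hw
    linarith
  · have h0 : ∀ θ, φ (polarPt 0 θ) = φ (toE2 0 0) := fun θ => by simp [polarPt]
    have hcas : ∀ m, ∫ θ in (-π)..π, cas m θ = if m = 0 then 2 * π else 0 := fun m => by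
      simpa [cas] using integral_cas_mul_cas m 0
    simp only [h0, hartley, intervalIntegral.integral_const_mul, hcas]
    rw [Finset.sum_eq_single 0]
    · simp
      ring
    · intro m _ hm
      simp [hm]
    · simp
  · intro m _
    simp [hartley, hψM]
  · simp [hψM]

lemma indcE_five_le : indcE 5 ≤ 9 := by
  refine sSup_le ?_
  rintro _ ⟨V, hfin, hV, hneg, rfl⟩
  by_contra! hlt
  let T : V →ₗ[ℝ] (Finset.Icc (-4 : ℤ) 4 → ℝ) :=
    { toFun := fun φ m => hartley (fun θ => (φ : E2 → ℝ) (polarPt 1 θ)) m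
      map_add' := by
        intro φ ψ
        ext m
        have h1 := (hV φ φ.2).1.continuous
        have h2 := (hV ψ ψ.2).1.continuous
        simp only [hartley, Submodule.coe_add, Pi.add_apply, add_mul]
        exact intervalIntegral.integral_add (Continuous.intervalIntegrable (by fun_prop) _ _)
          (Continuous.intervalIntegrable (by fun_prop) _ _)
      map_smul' := by
        intro c φ
        ext m
        simp [hartley, mul_assoc] }
  have hlt' : Module.finrank ℝ (Finset.Icc (-4 : ℤ) 4 → ℝ) < Module.finrank ℝ V := by
    rw [Module.finrank_fintype_fun_eq_card]
    have : (9 : ℕ) < Module.finrank ℝ V := by exact_mod_cast hlt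
    simpa using this
  obtain ⟨φ, hφ, hne⟩ := (Submodule.ne_bot_iff _).1 (LinearMap.ker_ne_bot_of_finrank_lt (f := T) hlt')
  refine absurd (hneg φ φ.2 (by simpa using hne)) (not_lt.2 ?_)
  exact QEinf_five_nonneg (hV φ φ.2).1 (hV φ φ.2).2 fun m hm =>
    congrFun (LinearMap.mem_ker.1 hφ) ⟨m, hm⟩

/-- A logarithmic cutoff of the ground state `sech τ`, with its defining estimates. -/
lemma exists_profile : ∃ (h h' : ℝ → ℝ) (a b : ℝ), 0 < a ∧ (∀ r, 0 ≤ r → r < a → h r = 0) ∧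
    (∀ r, b ≤ r → h r = 0) ∧ (∀ r, 0 < r → ContDiffAt ℝ (⊤ : ℕ∞) h r) ∧
    (∀ r, 0 < r → HasDerivAt h (h' r) r) ∧
    (∀ r, 0 < r → r * (h' r + 5 * outerWeight r * h r / r) ^ 2 ≤ 4 * r ^ 9 / (1 + r ^ 10) ^ 2) ∧
    ∀ r, 1 ≤ r → r ≤ 2 → h r ^ 2 / r = 4 * r ^ 9 / (1 + r ^ 10) ^ 2 := by
  let η : ContDiffBump (0 : ℝ) := ⟨1, 2, one_pos, by norm_num⟩
  have hη : ContDiff ℝ (⊤ : ℕ∞) η := η.contDiff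
  obtain ⟨K, hK⟩ := η.hasCompactSupport.deriv.exists_bound_of_continuous
    (hη.continuous_deriv (by simp))
  set C := max K 1 with hC
  have hC1 : 1 ≤ C := le_max_right _ _
  have hC0 : 0 < C := by linarith
  have hbd : ∀ t, |deriv η t / C| ≤ 1 := by
    intro t
    rw [abs_div, abs_of_pos hC0, div_le_one hC0]
    exact (hK t).trans (le_max_left _ _)
  have hη0 : ∀ t, 2 ≤ |t| → η t = 0 := fun t ht => η.zero_of_le_dist (by simpa using ht)
  have hη1 : ∀ t, |t| ≤ 1 → η t = 1 := fun t ht =>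
    η.one_of_mem_closedBall (by simpa using ht)
  have hs : ∀ r, HasDerivAt (fun r : ℝ => 2 * r ^ 5 / (1 + r ^ 10))
      ((10 * r ^ 4 * (1 + r ^ 10) - 2 * r ^ 5 * (10 * r ^ 9)) / (1 + r ^ 10) ^ 2) r := by
    intro r
    convert! ((hasDerivAt_pow 5 r).const_mul 2).div ((hasDerivAt_pow 10 r).const_add 1)
      (by positivity) using 1
    push_cast; ring
  have hχ : ∀ r, 0 < r → HasDerivAt (fun r => η (Real.log r / C))
      (deriv η (Real.log r / C) / C / r) r := by
    intro r hr
    have h1 : HasDerivAt (fun r => Real.log r / C) (r⁻¹ / C) r :=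
      (Real.hasDerivAt_log hr.ne').div_const C
    have h2 : HasDerivAt η (deriv η (Real.log r / C)) (Real.log r / C) :=
      (hη.differentiable (by simp) _).hasDerivAt
    convert! h2.comp r h1 using 1
    field_simp
  refine ⟨fun r => η (Real.log r / C) * (2 * r ^ 5 / (1 + r ^ 10)),
    fun r => deriv η (Real.log r / C) / C / r * (2 * r ^ 5 / (1 + r ^ 10)) + η (Real.log r / C) *
      ((10 * r ^ 4 * (1 + r ^ 10) - 2 * r ^ 5 * (10 * r ^ 9)) / (1 + r ^ 10) ^ 2),
    Real.exp (-(2 * C)), Real.exp (2 * C), Real.exp_pos _, ?_, ?_, ?_, ?_, ?_, ?_⟩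
  · intro r hr0 hr
    rcases hr0.eq_or_lt with rfl | hr0
    · simp
    · have : Real.log r < -(2 * C) := (Real.log_lt_iff_lt_exp hr0).2 hr
      beta_reduce
      rw [hη0, zero_mul]
      refine le_abs.2 (Or.inr ?_)
      rw [← neg_div, le_div_iff₀ hC0]
      linarith
  · intro r hr
    have hr0 := (Real.exp_pos _).trans_le hr
    have : 2 * C ≤ Real.log r := (Real.le_log_iff_exp_le hr0).2 hr
    beta_reduce
    rw [hη0, zero_mul]
    refine le_abs.2 (Or.inl ?_)
    rw [le_div_iff₀ hC0]
    linarith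
  · intro r hr
    have h1 : ContDiffAt ℝ (⊤ : ℕ∞) (fun r => Real.log r / C) r :=
      (Real.contDiffAt_log.2 hr.ne').div_const C
    refine (hη.contDiffAt.comp r h1).mul (ContDiffAt.div (by fun_prop) (by fun_prop) ?_)
    positivity
  · exact fun r hr => (hχ r hr).mul (hs r)
  · intro r hr
    have hne : 1 + r ^ 10 ≠ 0 := by positivity
    have h1 := hbd (Real.log r / C)
    rw [← sq_le_one_iff_abs_le_one] at h1
    have h2 : r * (deriv η (Real.log r / C) / C / r * (2 * r ^ 5 / (1 + r ^ 10)) +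
        η (Real.log r / C) *
        ((10 * r ^ 4 * (1 + r ^ 10) - 2 * r ^ 5 * (10 * r ^ 9)) / (1 + r ^ 10) ^ 2) +
        5 * outerWeight r * (η (Real.log r / C) * (2 * r ^ 5 / (1 + r ^ 10))) / r) ^ 2 =
        (deriv η (Real.log r / C) / C) ^ 2 * (4 * r ^ 9 / (1 + r ^ 10) ^ 2) := by
      unfold outerWeight
      rw [add_comm (r ^ 10) 1]
      field_simp
      ring
    rw [h2]
    exact mul_le_of_le_one_left (by positivity) h1
  · intro r hr1 hr2
    have hlog0 : 0 ≤ Real.log r := Real.log_nonneg hr1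
    have hlog : Real.log r ≤ 1 := by
      have := Real.log_le_sub_one_of_pos (by linarith : 0 < r)
      linarith
    have hr0 : r ≠ 0 := by positivity
    beta_reduce
    rw [hη1]
    · field_simp
      ring
    · rw [abs_of_nonneg (by positivity), div_le_one hC0]
      linarith

lemma hasDerivAt_sech_primitive (r : ℝ) :
    HasDerivAt (fun r : ℝ => -(2 / 5) / (1 + r ^ 10)) (4 * r ^ 9 / (1 + r ^ 10) ^ 2) r := by
  convert! (hasDerivAt_const r (-(2 / 5 : ℝ))).div ((hasDerivAt_pow 10 r).const_add 1)
    (by positivity) using 1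
  push_cast; ring

lemma integral_profile_neg {h h' F : ℝ → ℝ} {a M N : ℝ} (ha : 0 < a)
    (h0 : ∀ r, 0 ≤ r → r < a → h r = 0) (hd : ∀ r, 0 < r → HasDerivAt h (h' r) r)
    (hle : ∀ r, 0 < r →
      r * (h' r + 5 * outerWeight r * h r / r) ^ 2 ≤ 4 * r ^ 9 / (1 + r ^ 10) ^ 2)
    (heq : ∀ r, 1 ≤ r → r ≤ 2 → h r ^ 2 / r = 4 * r ^ 9 / (1 + r ^ 10) ^ 2)
    (hM : 2 ≤ M) (hN : 0 < N) (hF : ∀ u v, IntegrableOn F (Set.Icc u v))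
    (hFle : ∀ r, 0 < r → F r ≤ N * (r * h' r ^ 2 + 16 * h r ^ 2 / r -
      200 * r ^ 9 / (1 + r ^ 10) ^ 2 * h r ^ 2)) :
    ∫ r in (0)..M, F r < 0 := by
  set p : ℝ → ℝ := fun r => -(2 / 5) / (1 + r ^ 10) with hp
  have hpc : Continuous p :=
    continuous_iff_continuousAt.2 fun r => (hasDerivAt_sech_primitive r).continuousAt
  set D : ℝ → ℝ := fun r => -5 * outerWeight r * h r ^ 2 with hD
  have hTc : Continuous outerWeight :=
    continuous_iff_continuousAt.2 fun r => (hasDerivAt_outerWeight r).continuousAt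
  have hhc : ContinuousOn h (Set.Ici 0) := by
    intro x hx
    rcases (Set.mem_Ici.1 hx).eq_or_lt with rfl | hx
    · refine (continuousWithinAt_const (b := (0 : ℝ))).congr_of_eventuallyEq ?_ (h0 0 le_rfl ha)
      filter_upwards [self_mem_nhdsWithin, mem_nhdsWithin_of_mem_nhds (gt_mem_nhds ha)] with r h1 h2
      exact h0 r h1 h2
    · exact (hd x hx).continuousAt.continuousWithinAt
  have hDc : ContinuousOn D (Set.Ici 0) := by
    have := hTc.continuousOn (s := Set.Ici 0)
    fun_prop
  have hDd : ∀ r, 0 < r → HasDerivAt D (-5 * (20 * r ^ 9 / (r ^ 10 + 1) ^ 2) * h r ^ 2 +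
      -5 * outerWeight r * (2 * h r * h' r)) r := by
    intro r hr
    convert! ((hasDerivAt_outerWeight r).const_mul (-5)).mul ((hd r hr).pow 2) using 1
    simp only [Pi.pow_apply]
    push_cast; ring
  have hpt : ∀ r, 0 < r → F r ≤ N * ((-5 * (20 * r ^ 9 / (r ^ 10 + 1) ^ 2) * h r ^ 2 +
      -5 * outerWeight r * (2 * h r * h' r)) + (4 * r ^ 9 / (1 + r ^ 10) ^ 2 -
      9 * (h r ^ 2 / r))) := by
    intro r hr
    refine (hFle r hr).trans (mul_le_mul_of_nonneg_left ?_ hN.le)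
    have h2 : r * h' r ^ 2 + 16 * h r ^ 2 / r - 200 * r ^ 9 / (1 + r ^ 10) ^ 2 * h r ^ 2 =
        (-5 * (20 * r ^ 9 / (r ^ 10 + 1) ^ 2) * h r ^ 2 +
        -5 * outerWeight r * (2 * h r * h' r)) +
        (r * (h' r + 5 * outerWeight r * h r / r) ^ 2 - 9 * (h r ^ 2 / r)) := by
      have : 1 + r ^ 10 ≠ 0 := by positivity
      unfold outerWeight
      rw [add_comm (r ^ 10) 1]
      field_simp
      ring
    rw [h2]
    linarith [hle r hr]
  have bound : ∀ κ u v, 0 ≤ u → u ≤ v → (∀ r, u < r → r < v →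
      4 * r ^ 9 / (1 + r ^ 10) ^ 2 - 9 * (h r ^ 2 / r) ≤ κ * (4 * r ^ 9 / (1 + r ^ 10) ^ 2)) →
      ∫ r in u..v, F r ≤ N * (D v + κ * p v) - N * (D u + κ * p u) := by
    intro κ u v hu huv hκ
    refine intervalIntegral.integral_le_sub_of_hasDeriv_right_of_le
      (g := fun r => N * (D r + κ * p r)) huv ?_ (fun r hr =>
      (((hDd r (hu.trans_lt hr.1)).add ((hasDerivAt_sech_primitive r).const_mul κ)).const_mul
        N).hasDerivWithinAt) (hF u v) fun r hr => (hpt r (hu.trans_lt hr.1)).trans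
        (mul_le_mul_of_nonneg_left (by linarith [hκ r hr.1 hr.2]) hN.le)
    exact continuousOn_const.mul ((hDc.mono (Set.Icc_subset_Ici_self.trans
      (Set.Ici_subset_Ici.2 hu))).add (continuous_const.mul hpc).continuousOn)
  have nonneg : ∀ r, 0 < r → 0 ≤ h r ^ 2 / r := fun r hr => by positivity
  have b1 := bound 1 0 1 le_rfl zero_le_one fun r hr _ => by linarith [nonneg r hr]
  have b2 := bound (-8) 1 2 zero_le_one one_le_two fun r hr hr2 => by
    rw [heq r hr.le hr2.le]; linarith
  have b3 := bound 1 2 M zero_le_two hM fun r hr _ => by linarith [nonneg r (by linarith)]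
  have hFi : ∀ u v, u ≤ v → IntervalIntegrable F volume u v := fun u v huv =>
    (intervalIntegrable_iff_integrableOn_Icc_of_le huv).2 (hF u v)
  rw [← intervalIntegral.integral_add_adjacent_intervals (hFi 0 2 (by norm_num)) (hFi 2 M hM),
    ← intervalIntegral.integral_add_adjacent_intervals (hFi 0 1 (by norm_num))
      (hFi 1 2 (by norm_num))]
  have hD0 : D 0 = 0 := by simp [hD, h0 0 le_rfl ha]
  have hDM : D M ≤ 0 := by
    have : 0 ≤ outerWeight M := by
      have : (1 : ℝ) ≤ M ^ 10 := one_le_pow₀ (by linarith)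
      exact div_nonneg (by linarith) (by positivity)
    simp only [hD]
    nlinarith [mul_nonneg this (sq_nonneg (h M))]
  have hpM : p M ≤ 0 := by
    simp only [hp]
    exact div_nonpos_of_nonpos_of_nonneg (by norm_num) (by positivity)
  have hp0 : p 0 = -(2 / 5) := by norm_num [hp]
  have hp1 : p 1 = -(1 / 5) := by norm_num [hp]
  have hp2 : p 2 = -(2 / 5125) := by norm_num [hp]
  rw [hp0, hp1, hD0] at b1
  rw [hp1, hp2] at b2
  rw [hp2] at b3
  have := mul_nonpos_of_nonneg_of_nonpos hN.le hDM
  have := mul_nonpos_of_nonneg_of_nonpos hN.le hpM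
  nlinarith

/-- The function `h(r) cas(mθ)` in Cartesian coordinates. -/
def angularMode (h : ℝ → ℝ) (m : ℤ) (w : E2) : ℝ :=
  h ‖w‖ / ‖w‖ ^ m.natAbs * ((((w 0 : ℂ) + w 1 * Complex.I) ^ m.natAbs).re +
    m.sign * (((w 0 : ℂ) + w 1 * Complex.I) ^ m.natAbs).im)

lemma angularMode_polarPt (h : ℝ → ℝ) (m : ℤ) {r : ℝ} (hr : 0 < r) (θ : ℝ) :
    angularMode h m (polarPt r θ) = h r * cas m θ := by
  have hz : ((polarPt r θ 0 : ℝ) : ℂ) + (polarPt r θ 1 : ℝ) * Complex.I =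
      (r : ℂ) * (Complex.cos θ + Complex.sin θ * Complex.I) := by
    simp [polarPt, toE2]
    ring
  have hp : (((polarPt r θ 0 : ℝ) : ℂ) + (polarPt r θ 1 : ℝ) * Complex.I) ^ m.natAbs =
      ((r ^ m.natAbs * Real.cos (m.natAbs * θ) : ℝ) : ℂ) +
      ((r ^ m.natAbs * Real.sin (m.natAbs * θ) : ℝ) : ℂ) * Complex.I := by
    rw [hz, mul_pow, Complex.cos_add_sin_mul_I_pow]
    push_cast
    ring
  have hcas : Real.cos (m.natAbs * θ) + m.sign * Real.sin (m.natAbs * θ) = cas m θ := by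
    unfold cas
    rcases lt_trichotomy m 0 with hm | rfl | hm
    · have : ((m.natAbs : ℕ) : ℝ) = -(m : ℝ) := by
        rw [Nat.cast_natAbs, abs_of_neg hm]; push_cast; rfl
      rw [this, Int.sign_eq_neg_one_of_neg hm]
      simp
    · simp
    · have : ((m.natAbs : ℕ) : ℝ) = (m : ℝ) := by
        rw [Nat.cast_natAbs, abs_of_pos hm]
      rw [this, Int.sign_eq_one_of_pos hm]
      simp
  have hr' : r ^ m.natAbs ≠ 0 := by positivity
  rw [angularMode, hp, norm_polarPt hr.le, ← hcas]
  simp only [Complex.add_re, Complex.add_im, Complex.mul_re, Complex.mul_im, Complex.ofReal_re,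
    Complex.ofReal_im, Complex.I_re, Complex.I_im]
  field_simp
  ring

lemma contDiff_angularMode {h : ℝ → ℝ} {a : ℝ} (ha : 0 < a)
    (h0 : ∀ r, 0 ≤ r → r < a → h r = 0) (hs : ∀ r, 0 < r → ContDiffAt ℝ (⊤ : ℕ∞) h r) (m : ℤ) :
    ContDiff ℝ (⊤ : ℕ∞) (angularMode h m) := by
  rw [contDiff_iff_contDiffAt]
  intro w
  rcases eq_or_ne w 0 with rfl | hw
  · refine (contDiffAt_const (c := (0 : ℝ))).congr_of_eventuallyEq ?_
    filter_upwards [Metric.ball_mem_nhds (0 : E2) ha] with w hw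
    simp [angularMode, h0 ‖w‖ (norm_nonneg _) (by simpa using hw)]
  · have hn : ContDiffAt ℝ (⊤ : ℕ∞) (fun w : E2 => ‖w‖) w := contDiffAt_norm ℝ hw
    have hh : ContDiffAt ℝ (⊤ : ℕ∞) (fun w : E2 => h ‖w‖) w :=
      (hs _ (norm_pos_iff.2 hw)).comp w hn
    have hcoord : ∀ i, ContDiff ℝ (⊤ : ℕ∞) (fun w : E2 => ((w i : ℝ) : ℂ)) := fun i =>
      Complex.ofRealCLM.contDiff.comp (by fun_prop)
    have hz : ContDiff ℝ (⊤ : ℕ∞)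
        (fun w : E2 => ((w 0 : ℂ) + w 1 * Complex.I) ^ m.natAbs) :=
      ((hcoord 0).add ((hcoord 1).mul contDiff_const)).pow _
    have hre := (Complex.reCLM.contDiff.comp hz).contDiffAt (x := w)
    have him := (Complex.imCLM.contDiff.comp hz).contDiffAt (x := w)
    exact (hh.div (hn.pow _) (pow_ne_zero _ (norm_ne_zero_iff.2 hw))).mul
      (hre.add (contDiffAt_const.mul him))

lemma QEinf_five_neg {h h' : ℝ → ℝ} {a : ℝ} (ha : 0 < a)
    (h0 : ∀ r, 0 ≤ r → r < a → h r = 0) (hd : ∀ r, 0 < r → HasDerivAt h (h' r) r)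
    (hle : ∀ r, 0 < r →
      r * (h' r + 5 * outerWeight r * h r / r) ^ 2 ≤ 4 * r ^ 9 / (1 + r ^ 10) ^ 2)
    (heq : ∀ r, 1 ≤ r → r ≤ 2 → h r ^ 2 / r = 4 * r ^ 9 / (1 + r ^ 10) ^ 2)
    {φ : E2 → ℝ} (hφ : ContDiff ℝ (⊤ : ℕ∞) φ) (hc : HasCompactSupport φ)
    {c : Finset.Icc (-4 : ℤ) 4 → ℝ} (hc0 : c ≠ 0)
    (hφc : ∀ r θ, 0 < r → φ (polarPt r θ) = h r * ∑ m, c m * cas m θ) :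
    QEinf 5 φ < 0 := by
  obtain ⟨M, hM2, hM⟩ := hc.exists_radius 2
  have hφcont := hφ.continuous
  have hu := continuous_radialDeriv hφ
  have hv := continuous_angularDeriv hφ
  have hN : 0 < 2 * π * ∑ m, c m ^ 2 := by
    obtain ⟨m, hm⟩ := Function.ne_iff.1 hc0
    have : 0 < ∑ m, c m ^ 2 :=
      Finset.sum_pos' (fun _ _ => sq_nonneg _) ⟨m, Finset.mem_univ _, sq_pos_of_ne_zero hm⟩
    positivity
  rw [QEinf_five_eq_polar hφ (by linarith) hM]
  refine integral_profile_neg ha h0 hd hle heq hM2 hN (fun u v => ?_) fun r hr => ?_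
  · refine (Continuous.continuousOn ?_).integrableOn_compact isCompact_Icc
    have h1 := intervalIntegral.continuous_parametric_intervalIntegral_of_continuous'
      (f := fun r θ => radialDeriv φ r θ ^ 2) (μ := volume) (by fun_prop) (-π) π
    have h2 := intervalIntegral.continuous_parametric_intervalIntegral_of_continuous'
      (f := fun r θ => angularDeriv φ r θ ^ 2) (μ := volume) (by fun_prop) (-π) π
    have h3 := intervalIntegral.continuous_parametric_intervalIntegral_of_continuous'
      (f := fun r θ => φ (polarPt r θ) ^ 2) (μ := volume) (by fun_prop) (-π) π
    have h4 : Continuous fun r : ℝ => 200 * r ^ 9 / (1 + r ^ 10) ^ 2 :=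
      Continuous.div (by fun_prop) (by fun_prop) fun r => by positivity
    fun_prop
  · have hrad : ∀ θ, radialDeriv φ r θ = h' r * ∑ m, c m * cas m θ := fun θ => by
      refine (hasDerivAt_radius hφ r θ).unique (((hd r hr).mul_const _).congr_of_eventuallyEq ?_)
      filter_upwards [lt_mem_nhds hr] with r hr using hφc r θ hr
    have hang : ∀ θ, r * angularDeriv φ r θ =
        h r * ∑ m : Finset.Icc (-4 : ℤ) 4, c m * m * cas (-m) θ := fun θ => by
      refine (hasDerivAt_angle hφ r θ).unique ?_
      simp_rw [hφc r _ hr]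
      refine HasDerivAt.const_mul _ (HasDerivAt.fun_sum fun m _ => ?_)
      simpa [mul_assoc] using (hasDerivAt_cas m θ).const_mul (c m)
    have e1 : ∫ θ in (-π)..π, radialDeriv φ r θ ^ 2 = h' r ^ 2 * (2 * π * ∑ m, c m ^ 2) := by
      simp_rw [hrad, mul_pow]
      rw [intervalIntegral.integral_const_mul,
        integral_sq_sum_cas Finset.univ c Subtype.val_injective]
    have e2 : ∫ θ in (-π)..π, φ (polarPt r θ) ^ 2 = h r ^ 2 * (2 * π * ∑ m, c m ^ 2) := by
      simp_rw [hφc r _ hr, mul_pow]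
      rw [intervalIntegral.integral_const_mul,
        integral_sq_sum_cas Finset.univ c Subtype.val_injective]
    have e3 : r * (∫ θ in (-π)..π, angularDeriv φ r θ ^ 2) =
        h r ^ 2 / r * (2 * π * ∑ m : Finset.Icc (-4 : ℤ) 4, (c m * m) ^ 2) := by
      have e : ∀ θ, angularDeriv φ r θ ^ 2 = (h r / r) ^ 2 *
          (∑ m : Finset.Icc (-4 : ℤ) 4, c m * m * cas (-m) θ) ^ 2 := fun θ => by
        rw [← mul_pow, div_mul_eq_mul_div, ← hang, mul_div_cancel_left₀ _ hr.ne']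
      simp_rw [e]
      rw [intervalIntegral.integral_const_mul,
        integral_sq_sum_cas Finset.univ (fun m : Finset.Icc (-4 : ℤ) 4 => c m * m)
          (k := fun m => -(m : ℤ)) (neg_injective.comp Subtype.val_injective)]
      field_simp
    have e4 : ∑ m : Finset.Icc (-4 : ℤ) 4, (c m * m) ^ 2 ≤ 16 * ∑ m, c m ^ 2 := by
      rw [Finset.mul_sum]
      refine Finset.sum_le_sum fun m _ => ?_
      have hm := Finset.mem_Icc.1 m.2
      have h1 : (-4 : ℝ) ≤ (m : ℤ) := by exact_mod_cast hm.1
      have h2 : ((m : ℤ) : ℝ) ≤ 4 := by exact_mod_cast hm.2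
      rw [mul_pow, mul_comm]
      exact mul_le_mul_of_nonneg_right (by nlinarith) (sq_nonneg _)
    rw [e1, e2, e3]
    have e5 : h r ^ 2 / r * (2 * π * ∑ m : Finset.Icc (-4 : ℤ) 4, (c m * m) ^ 2) ≤
        h r ^ 2 / r * (2 * π * (16 * ∑ m, c m ^ 2)) := by gcongr
    refine (sub_le_sub_right (add_le_add_right e5 _) _).trans (le_of_eq ?_)
    ring

lemma le_indcE_five : 9 ≤ indcE 5 := by
  obtain ⟨h, h', a, b, ha, h0, hb, hs, hd, hle, heq⟩ := exists_profile
  let L := Fintype.linearCombination ℝ fun m : Finset.Icc (-4 : ℤ) 4 => angularMode h m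
  have hLapp : ∀ c w, L c w = ∑ m : Finset.Icc (-4 : ℤ) 4, c m * angularMode h m w := fun c w => by
    simp [L, Fintype.linearCombination_apply]
  have hsm : ∀ c, ContDiff ℝ (⊤ : ℕ∞) (L c) := fun c => by
    rw [funext (hLapp c)]
    exact ContDiff.sum fun m _ => contDiff_const.mul (contDiff_angularMode ha h0 hs m)
  have hcs : ∀ c, HasCompactSupport (L c) := fun c => by
    refine HasCompactSupport.intro (isCompact_closedBall 0 b) fun w hw => ?_
    rw [hLapp]
    refine Finset.sum_eq_zero fun m _ => ?_
    rw [mem_closedBall_zero_iff, not_le] at hw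
    simp [angularMode, hb _ hw.le]
  have hneg : ∀ c, c ≠ 0 → QEinf 5 (L c) < 0 := fun c hc =>
    QEinf_five_neg ha h0 hd hle heq (hsm c) (hcs c) hc fun r θ hr => by
      rw [hLapp, Finset.mul_sum]
      refine Finset.sum_congr rfl fun m _ => ?_
      rw [angularMode_polarPt h m hr]
      ring
  have hQ0 : QEinf 5 0 = 0 := by simp [QEinf, gradient]
  have hinj : Function.Injective L := (injective_iff_map_eq_zero L).2 fun c hc => by
    by_contra hne
    have := hneg c hne
    rw [hc, hQ0] at this
    exact lt_irrefl _ this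
  refine le_sSup ⟨LinearMap.range L, inferInstance, ?_, ?_, ?_⟩
  · rintro _ ⟨c, rfl⟩
    exact ⟨hsm c, hcs c⟩
  · rintro _ ⟨c, rfl⟩ hne
    exact hneg c fun hc => hne (by rw [hc, map_zero])
  · rw [LinearMap.finrank_range_of_inj hinj, Module.finrank_fintype_fun_eq_card]
    simp

/-- the index of the complete dihedral Enneper surface of order 5 for
compactly supported perturbations equals 9. -/
theorem enneper5_indc_eq_nine : indcE 5 = 9 := by
  exact le_antisymm indcE_five_le le_indcE_five
end
end
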